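/- Let k ≥ 3 be an integer with k ∉ {4,5}. For all sufficiently large n, if G is an n-vertex W_{2k+1}-free simple graph attaining the maximum spectral radius among all n-vertex W_{2k+1}-free graphs and V(G) = S ⊔ T is a maximum cut of G, then there exists a vertex of internal degree exactly k − 1; that is, there is v ∈ S with d_S(v) = k − 1 or v ∈ T with d_T(v) = k − 1. -/

import Mathlib

/-- The wheel graph on `t` vertices: vertex `0` joined to every vertex of the
cycle `1, 2, …, t-1` (with `t-1` adjacent to `1`). -/
def wheelGraph (t : ℕ) : SimpleGraph (Fin t) where
  Adj a b := a ≠ b ∧ (a.val = 0 ∨ b.val = 0 ∨ a.val + 1 = b.val ∨ b.val + 1 = a.val ∨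
      (a.val = 1 ∧ b.val = t - 1) ∨ (b.val = 1 ∧ a.val = t - 1))
  symm := by
    refine ⟨?_⟩
    intro a b h
    exact ⟨h.1.symm, by tauto⟩
  loopless := by
    refine ⟨?_⟩
    intro a h
    exact h.1 rfl

/-- `G` contains a copy of `F`, i.e. a subgraph isomorphic to `F`. -/
def ContainsCopy {α β : Type*} (F : SimpleGraph α) (G : SimpleGraph β) : Prop :=
  ∃ f : α ↪ β, ∀ a b, F.Adj a b → G.Adj (f a) (f b)

/-- `G` is `W_t`-free: it contains no subgraph isomorphic to the wheel on `t` vertices. -/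
def WheelFree (t : ℕ) {n : ℕ} (G : SimpleGraph (Fin n)) : Prop :=
  ¬ ContainsCopy (wheelGraph t) G

/-- The spectral radius of `G`: the largest eigenvalue of its adjacency matrix. -/
noncomputable def lam1 {n : ℕ} (G : SimpleGraph (Fin n)) : ℝ := by
  classical
  exact sSup {μ : ℝ | Module.End.HasEigenvalue (Matrix.toLin' (G.adjMatrix ℝ)) μ}

/-- The number of edges of a graph on a finite vertex type. -/
noncomputable def edgeCount {V : Type*} [Fintype V] (G : SimpleGraph V) : ℕ := by
  classical
  exact G.edgeFinset.card

/-- The degree of a vertex. -/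
noncomputable def deg {n : ℕ} (G : SimpleGraph (Fin n)) (v : Fin n) : ℕ := by
  classical
  exact G.degree v

/-- The number of neighbours of `v` inside the set `A`. -/
noncomputable def degIn {n : ℕ} (G : SimpleGraph (Fin n)) (A : Finset (Fin n)) (v : Fin n) : ℕ := by
  classical
  exact (A.filter fun u => G.Adj v u).card

/-- The number of edges of `G` with one endpoint in `S` and the other outside `S`. -/
noncomputable def cutCount {n : ℕ} (G : SimpleGraph (Fin n)) (S : Finset (Fin n)) : ℕ := by
  classical
  exact ((Finset.univ : Finset (Fin n × Fin n)).filter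
    fun p => G.Adj p.1 p.2 ∧ p.1 ∈ S ∧ p.2 ∉ S).card

/-- `(S, T)` is a maximum cut of `G`. -/
def IsMaxCut {n : ℕ} (G : SimpleGraph (Fin n)) (S T : Finset (Fin n)) : Prop :=
  T = Sᶜ ∧ ∀ S' : Finset (Fin n), cutCount G S' ≤ cutCount G S

/-- `G` attains the maximum spectral radius among all `n`-vertex `W_t`-free graphs. -/
def IsSpexWheel (t : ℕ) {n : ℕ} (G : SimpleGraph (Fin n)) : Prop :=
  WheelFree t G ∧ ∀ H : SimpleGraph (Fin n), WheelFree t H → lam1 H ≤ lam1 G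

/-- `G` attains the maximum number of edges among all `n`-vertex `W_t`-free graphs. -/
def IsExWheel (t : ℕ) {n : ℕ} (G : SimpleGraph (Fin n)) : Prop :=
  WheelFree t G ∧ ∀ H : SimpleGraph (Fin n), WheelFree t H → edgeCount H ≤ edgeCount G

/-!
Let `d_S`, `d_T` be the averages of the internal degrees in `S` and in `T`, weighted by the Perron
vector. Comparing `G` with the join of a `(k - 1)`-regular graph and an independent set, in about
equal parts, gives `λ (λ - (k - 1)) ≥ n² / 4 - O(1)`, while the eigenvalue equation gives
`(λ - d_S) (λ - d_T) ≤ |S| |T|`; hence `d_S + d_T ≥ k - 1 - o(1)`.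

By Kővári–Sós–Turán inside neighbourhoods, `G` is nearly complete between `S` and `T`. Giving a
vertex a new neighbourhood shows that all entries of the Perron vector are at least `1 / 2`, so that
no vertex misses more than `o(n)` vertices of the other part. Then `W_{2k+1}`-freeness bounds all
internal degrees by `k - 1`, and those in `S` by `2k / 3`, respectively `2k / 4`, if an edge,
respectively a path on three vertices, can be found in `T` robustly; otherwise `d_T` is at most
`o(1)`, respectively `1 + o(1)`. So if no internal degree is `k - 1`, then they are all less than
`k / 2`. For even `k` this contradicts `d_S + d_T ≥ k - 1 - o(1)`. For odd `k` the parts `S` and `T`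
themselves carry the comparison graph, `|S| |T| ≤ λ (λ - (k - 1))`, and this contradicts
`(λ - (k - 1) / 2)² ≤ |S| |T|`.
-/

section Spectral

open Matrix

section SymmetricMatrix

variable {V : Type*} [Fintype V] {A : Matrix V V ℝ} {μ : ℝ}

lemma dotProduct_mulVec_le_abs (hA : ∀ i j, 0 ≤ A i j) (y : V → ℝ) :
    y ⬝ᵥ A *ᵥ y ≤ |y| ⬝ᵥ A *ᵥ |y| := by
  simp only [dotProduct, mulVec, Finset.mul_sum]
  refine Finset.sum_le_sum fun i _ => Finset.sum_le_sum fun j _ => ?_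
  calc y i * (A i j * y j) ≤ |y i * (A i j * y j)| := le_abs_self _
    _ = |y| i * (A i j * |y| j) := by rw [abs_mul, abs_mul, abs_of_nonneg (hA i j)]; rfl

variable [DecidableEq V]

lemma posSemidef_smul_one_sub (hA : A.IsHermitian) (hμ : μ ∈ upperBounds (spectrum ℝ A)) :
    (μ • (1 : Matrix V V ℝ) - A).PosSemidef := by
  refine posSemidef_iff_isHermitian_and_spectrum_nonneg.2
    ⟨(isHermitian_one.smul (IsSelfAdjoint.all μ)).sub hA, ?_⟩
  rw [← Algebra.algebraMap_eq_smul_one, ← spectrum.singleton_sub_eq, Set.singleton_sub]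
  rintro _ ⟨ν, hν, rfl⟩
  exact sub_nonneg.2 (hμ hν)

lemma dotProduct_smul_one_sub_mulVec (y : V → ℝ) :
    y ⬝ᵥ (μ • (1 : Matrix V V ℝ) - A) *ᵥ y = μ * (y ⬝ᵥ y) - y ⬝ᵥ A *ᵥ y := by
  rw [sub_mulVec, smul_mulVec, one_mulVec, dotProduct_sub, dotProduct_smul, smul_eq_mul]

lemma dotProduct_mulVec_le (hA : A.IsHermitian) (hμ : μ ∈ upperBounds (spectrum ℝ A))
    (y : V → ℝ) : y ⬝ᵥ A *ᵥ y ≤ μ * (y ⬝ᵥ y) := by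
  have h := (posSemidef_smul_one_sub hA hμ).dotProduct_mulVec_nonneg y
  rw [star_trivial, dotProduct_smul_one_sub_mulVec] at h
  linarith

-- `|y|` also attains the maximum `μ` of the Rayleigh quotient, hence is an eigenvector.
lemma mulVec_abs_eq_smul (hA : A.IsHermitian) (hA₀ : ∀ i j, 0 ≤ A i j)
    (hμ : μ ∈ upperBounds (spectrum ℝ A)) {y : V → ℝ} (hy : A *ᵥ y = μ • y) :
    A *ᵥ |y| = μ • |y| := by
  have hM := posSemidef_smul_one_sub hA hμ
  have habs : |y| ⬝ᵥ |y| = y ⬝ᵥ y := Finset.sum_congr rfl fun i _ => abs_mul_abs_self (y i)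
  have hmax : |y| ⬝ᵥ A *ᵥ |y| = μ * (|y| ⬝ᵥ |y|) := by
    refine le_antisymm (dotProduct_mulVec_le hA hμ _) ?_
    rw [habs, ← smul_eq_mul, ← dotProduct_smul, ← hy]
    exact dotProduct_mulVec_le_abs hA₀ y
  have hker : (μ • (1 : Matrix V V ℝ) - A) *ᵥ |y| = 0 := by
    rw [← hM.dotProduct_mulVec_zero_iff, star_trivial, dotProduct_smul_one_sub_mulVec, hmax,
      sub_self]
  rw [sub_mulVec, smul_mulVec, one_mulVec, sub_eq_zero] at hker
  exact hker.symm

end SymmetricMatrix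

open scoped Classical

variable {n : ℕ} (G : SimpleGraph (Fin n))

lemma isHermitian_adjMatrix : (G.adjMatrix ℝ).IsHermitian := by
  rw [IsHermitian, conjTranspose_eq_transpose_of_trivial]
  exact G.isSymm_adjMatrix

lemma lam1_eq_sSup_spectrum : lam1 G = sSup (spectrum ℝ (G.adjMatrix ℝ)) := by
  unfold lam1
  simp only [Module.End.hasEigenvalue_iff_mem_spectrum, spectrum_toLin', Set.ofPred_mem_eq]

lemma lam1_mem_upperBounds_spectrum : lam1 G ∈ upperBounds (spectrum ℝ (G.adjMatrix ℝ)) :=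
  fun _ hμ => lam1_eq_sSup_spectrum G ▸ le_csSup finite_real_spectrum.bddAbove hμ

lemma lam1_mem_spectrum [NeZero n] : lam1 G ∈ spectrum ℝ (G.adjMatrix ℝ) := by
  rw [lam1_eq_sSup_spectrum]
  exact Set.Nonempty.csSup_mem ⟨_, (isHermitian_adjMatrix G).eigenvalues_mem_spectrum_real 0⟩
    finite_real_spectrum

lemma dotProduct_adjMatrix_mulVec_le_lam1 (y : Fin n → ℝ) :
    y ⬝ᵥ G.adjMatrix ℝ *ᵥ y ≤ lam1 G * (y ⬝ᵥ y) :=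
  dotProduct_mulVec_le (isHermitian_adjMatrix G) (lam1_mem_upperBounds_spectrum G) y

/-- A nonnegative eigenvector `x` of the adjacency matrix of `G` for the eigenvalue `lam1 G`,
normalised so that its largest entry is `1`. -/
structure IsPerronVector (x : Fin n → ℝ) : Prop where
  nonneg (v : Fin n) : 0 ≤ x v
  le_one (v : Fin n) : x v ≤ 1
  exists_eq_one : ∃ z, x z = 1
  sum_neighborFinset (v : Fin n) : ∑ u ∈ G.neighborFinset v, x u = lam1 G * x v

lemma exists_isPerronVector [NeZero n] : ∃ x, IsPerronVector G x := by
  have hev : Module.End.HasEigenvalue (toLin' (G.adjMatrix ℝ)) (lam1 G) := by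
    rw [Module.End.hasEigenvalue_iff_mem_spectrum, spectrum_toLin']
    exact lam1_mem_spectrum G
  obtain ⟨y, hy, hy₀⟩ := hev.exists_hasEigenvector
  rw [Module.End.mem_eigenspace_iff, toLin'_apply] at hy
  have habs := mulVec_abs_eq_smul (isHermitian_adjMatrix G)
    (fun i j => by rw [SimpleGraph.adjMatrix_apply]; split_ifs <;> simp)
    (lam1_mem_upperBounds_spectrum G) hy
  obtain ⟨z, hz⟩ := Finite.exists_max |y|
  have hz₀ : 0 < |y z| := by
    obtain ⟨v, hv⟩ := Function.ne_iff.1 hy₀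
    exact (abs_pos.2 hv).trans_le (hz v)
  refine ⟨fun v => |y v| / |y z|, fun v => by positivity, fun v => div_le_one_of_le₀ (hz v) hz₀.le,
    ⟨z, div_self hz₀.ne'⟩, fun v => ?_⟩
  have hv := congrFun habs v
  rw [SimpleGraph.adjMatrix_mulVec_apply, Pi.smul_apply, smul_eq_mul] at hv
  rw [← Finset.sum_div, ← mul_div_assoc]
  exact congrArg (· / |y z|) hv

end Spectral

section Embedding

open Finset

variable {V : Type*} {G : SimpleGraph V}

lemma containsCopy_wheelGraph_of_list {v : V} {l : List V} (hnd : l.Nodup)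
    (hchain : l.IsChain G.Adj) (hv : ∀ u ∈ l, G.Adj v u)
    (hclosed : ∀ a ∈ l.head?, ∀ b ∈ l.getLast?, G.Adj b a) :
    ContainsCopy (wheelGraph (l.length + 1)) G := by
  have hsucc (i j : Fin l.length) (h : i.val + 1 = j.val) : G.Adj l[i] l[j] := by
    simpa only [Fin.getElem_fin, ← h] using List.isChain_iff_getElem.1 hchain i (by omega)
  have hlast (i j : Fin l.length) (hi : i.val = 0) (hj : j.val = l.length - 1) :
      G.Adj l[j] l[i] := by
    refine hclosed _ ?_ _ ?_
    · simp only [List.head?_eq_getElem?, Fin.getElem_fin, hi, Option.mem_def]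
      exact List.getElem?_eq_getElem _
    · simp only [List.getLast?_eq_getElem?, Fin.getElem_fin, hj, Option.mem_def]
      exact List.getElem?_eq_getElem _
  refine ⟨⟨Fin.cons v l.get, Fin.cons_injective_iff.2
    ⟨fun ⟨i, hi⟩ => G.irrefl (hi ▸ hv _ (l.get_mem i)), hnd.injective_get⟩⟩, fun a b => ?_⟩
  cases a using Fin.cases with
  | zero =>
    cases b using Fin.cases with
    | zero => exact fun h => absurd rfl h.1
    | succ j => exact fun _ => hv _ (l.get_mem j)
  | succ i =>
    cases b using Fin.cases with
    | zero => exact fun _ => (hv _ (l.get_mem i)).symm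
    | succ j =>
      rintro ⟨-, h⟩
      simp only [Fin.val_succ, Nat.add_sub_cancel, Nat.add_right_cancel_iff,
        Nat.add_eq_right, Nat.succ_ne_zero, false_or] at h
      rcases h with h | h | ⟨hi, hj⟩ | ⟨hj, hi⟩
      · exact hsucc i j h
      · exact (hsucc j i h).symm
      · exact (hlast i j hi (by omega)).symm
      · exact hlast j i hj (by omega)

/-- Even after deleting any `K` vertices, `X` contains a path of `G` on `p` vertices for every
`1 ≤ p ≤ q`. Paths are recorded as duplicate-free chains. -/
def HasRobustPaths (G : SimpleGraph V) (X : Finset V) (q K : ℕ) : Prop :=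
  ∀ F : Finset V, #F ≤ K → ∀ p, 1 ≤ p → p ≤ q →
    ∃ P : List V, P.length = p ∧ P.Nodup ∧ P.IsChain G.Adj ∧ ∀ w ∈ P, w ∈ X ∧ w ∉ F

lemma hasRobustPaths_one {X : Finset V} {K : ℕ} (hX : K < #X) : HasRobustPaths G X 1 K := by
  intro F hF p hp hp'
  obtain ⟨w, hwX, hwF⟩ := exists_mem_notMem_of_card_lt_card (hF.trans_lt hX)
  exact ⟨[w], by simp; omega, by simp, by simp, by simpa using ⟨hwX, hwF⟩⟩

lemma exists_sum_eq_of_card_mul_le {ι : Type*} {a b : ℕ} (hab : a ≤ b)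
    (s : Finset ι) {m : ℕ} (ha : #s * a ≤ m) (hb : m ≤ #s * b) :
    ∃ f : ι → ℕ, (∀ i ∈ s, a ≤ f i ∧ f i ≤ b) ∧ ∑ i ∈ s, f i = m := by
  classical
  induction s using Finset.induction_on generalizing m with
  | empty => exact ⟨0, by simp, by simp_all⟩
  | insert i s hi ih =>
    rw [card_insert_of_notMem hi, add_one_mul] at ha hb
    have hle : #s * a ≤ #s * b := by gcongr
    obtain ⟨c, hcm, hac, hcb, hlo, hhi⟩ :
        ∃ c ≤ m, a ≤ c ∧ c ≤ b ∧ #s * a ≤ m - c ∧ m ≤ #s * b + c :=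
      ⟨max a (m - #s * b), by omega, by omega, by omega, by omega, by omega⟩
    obtain ⟨f, hf, hsum⟩ := ih hlo (by omega)
    refine ⟨Function.update f i c, fun j hj => ?_, ?_⟩
    · rcases eq_or_ne j i with rfl | hji
      · simpa using ⟨hac, hcb⟩
      · simpa [hji] using hf j (mem_of_mem_insert_of_ne hj hji)
    · rw [sum_insert hi, Function.update_self, sum_update_of_notMem hi, hsum]
      omega

lemma exists_path_in_star {X : Finset V} {w : V} {p : ℕ} {N : Finset V} (hw : w ∈ X) (hN : N ⊆ X)
    (hadj : ∀ u ∈ N, G.Adj w u) (hp : 1 ≤ p) (hpN : p ≤ #N + 1) (hp3 : p ≤ 3) :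
    ∃ P : List V, P.length = p ∧ P.Nodup ∧ P.IsChain G.Adj ∧ ∀ u ∈ P, u ∈ X := by
  obtain rfl | rfl | rfl : p = 1 ∨ p = 2 ∨ p = 3 := by omega
  · exact ⟨[w], by simpa⟩
  · obtain ⟨a, ha⟩ := card_pos.1 (show 0 < #N by omega)
    exact ⟨[w, a], by simp [(hadj a ha).ne, hadj a ha, hw, hN ha]⟩
  · obtain ⟨a, ha, b, hb, hab⟩ := one_lt_card.1 (show 1 < #N by omega)
    exact ⟨[a, w, b], by simp [(hadj a ha).ne', (hadj b hb).ne, (hadj a ha).symm, hadj b hb, hab,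
      hw, hN ha, hN hb]⟩

-- The list is `u₁ P₁ u₂ P₂ …` with `P_i` a path in `X`; each `P_i` avoids everything after it.
lemma exists_interleaved_chain {X : Finset V} {q K : ℕ} (hX : HasRobustPaths G X q K)
    {f : V → ℕ} :
    ∀ us : List V, us.Nodup → (∀ u ∈ us, u ∉ X) → (∀ u ∈ us, ∀ w ∈ X, G.Adj u w) →
      (∀ u ∈ us, 2 ≤ f u ∧ f u ≤ q + 1) → (us.map f).sum ≤ K →
      ∃ l : List V, l.length = (us.map f).sum ∧ l.Nodup ∧ l.IsChain G.Adj ∧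
        (∀ w ∈ l, w ∈ us ∨ w ∈ X) ∧ l.head? = us.head? ∧ ∀ b ∈ l.getLast?, b ∈ X
  | [], _, _, _, _, _ => ⟨[], by simp⟩
  | u :: us, hnd, hdisj, hadj, hf, hK => by
    classical
    simp only [List.nodup_cons, List.forall_mem_cons, List.map_cons, List.sum_cons] at *
    obtain ⟨l, hlen, hlnd, hlch, hlmem, hlhead, hllast⟩ :=
      exists_interleaved_chain hX us hnd.2 hdisj.2 hadj.2 hf.2 (by omega)
    obtain ⟨P, hPlen, hPnd, hPch, hPmem⟩ :=
      hX l.toFinset (l.toFinset_card_le.trans (by omega)) (f u - 1) (by omega) (by omega)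
    have hP : P ≠ [] := by rintro rfl; simp at hPlen; omega
    refine ⟨u :: (P ++ l), by simp [hPlen, hlen]; omega, ?_, ?_, ?_, rfl, ?_⟩
    · refine List.nodup_cons.2 ⟨fun h => ?_, List.nodup_append.2 ⟨hPnd, hlnd, ?_⟩⟩
      · rcases List.mem_append.1 h with h | h
        · exact hdisj.1 (hPmem u h).1
        · exact (hlmem u h).elim hnd.1 hdisj.1
      · rintro a ha _ hb rfl
        exact (hPmem a ha).2 (List.mem_toFinset.2 hb)
    · refine List.isChain_cons.2 ⟨fun w hw => ?_, List.isChain_append.2 ⟨hPch, hlch, ?_⟩⟩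
      · rw [List.head?_append_of_ne_nil _ hP] at hw
        exact hadj.1 w (hPmem w (List.mem_of_mem_head? hw)).1
      · intro a ha b hb
        exact (hadj.2 b (List.mem_of_mem_head? (hlhead ▸ hb)) a
          (hPmem a (List.mem_of_getLast? ha)).1).symm
    · intro w hw
      simp only [List.mem_cons, List.mem_append] at hw ⊢
      rcases hw with rfl | hw | hw
      · exact .inl (.inl rfl)
      · exact .inr (hPmem w hw).1
      · exact (hlmem w hw).imp_left .inr
    · intro b hb
      rcases eq_or_ne l [] with rfl | hl
      · rw [List.append_nil, List.getLast?_cons_of_ne_nil hP] at hb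
        exact (hPmem b (List.mem_of_getLast? hb)).1
      · rw [List.getLast?_cons_of_ne_nil (by simp [hP]), List.getLast?_append_of_ne_nil _ hl] at hb
        exact hllast b hb

-- The rim runs through all of `U`, with paths of `X` inserted between consecutive vertices.
lemma containsCopy_wheelGraph_of_hasRobustPaths {k q : ℕ} {v : V} {U X : Finset V}
    (hU : #U ≤ k) (hkU : 2 * k ≤ #U * (q + 1)) (hvU : ∀ u ∈ U, G.Adj v u)
    (hvX : ∀ w ∈ X, G.Adj v w) (hUX : ∀ u ∈ U, ∀ w ∈ X, G.Adj u w)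
    (hX : HasRobustPaths G X q (2 * k)) : ContainsCopy (wheelGraph (2 * k + 1)) G := by
  obtain ⟨f, hf, hsum⟩ : ∃ f : V → ℕ, (∀ u ∈ U, 2 ≤ f u ∧ f u ≤ q + 1) ∧ ∑ u ∈ U, f u = 2 * k := by
    rcases Nat.lt_or_ge q 1 with hq | hq
    · obtain rfl : k = 0 := by nlinarith
      exact ⟨0, by simp_all⟩
    · exact exists_sum_eq_of_card_mul_le (by omega) U (by omega) hkU
  rw [← sum_map_toList] at hsum
  obtain ⟨l, hl, hnd, hchain, hmem, hhead, hlast⟩ :=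
    exists_interleaved_chain hX U.toList U.nodup_toList
      (fun u hu hw => G.irrefl (hUX u (mem_toList.1 hu) u hw))
      (fun u hu => hUX u (mem_toList.1 hu))
      (fun u hu => hf u (mem_toList.1 hu)) hsum.le
  rw [hsum] at hl
  refine hl ▸ containsCopy_wheelGraph_of_list hnd hchain
    (fun u hu => (hmem u hu).elim (fun h => hvU u (mem_toList.1 h)) (hvX u)) fun a ha b hb => ?_
  exact (hUX a (mem_toList.1 (List.mem_of_mem_head? (hhead ▸ ha))) b (hlast b hb)).symm

lemma containsCopy_wheelGraph_of_completeBipartite {k : ℕ} {v : V} {U X : Finset V}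
    (hU : #U = k) (hX : 2 * k < #X) (hvU : ∀ u ∈ U, G.Adj v u) (hvX : ∀ w ∈ X, G.Adj v w)
    (hUX : ∀ u ∈ U, ∀ w ∈ X, G.Adj u w) : ContainsCopy (wheelGraph (2 * k + 1)) G :=
  containsCopy_wheelGraph_of_hasRobustPaths hU.le (by omega) hvU hvX hUX (hasRobustPaths_one hX)

variable [DecidableRel G.Adj]

lemma exists_mem_forall_adj_notMem {T W Y : Finset V} {D : ℕ} (hWT : W ⊆ T)
    (hD : ∀ w ∈ T, #{u ∈ T | G.Adj w u} ≤ D) (hY : #Y * (D + 1) < #W) :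
    ∃ w ∈ W, w ∉ Y ∧ ∀ u ∈ T, G.Adj w u → u ∉ Y := by
  classical
  have hcard : #(Y ∪ {y ∈ Y | y ∈ T}.biUnion fun y => {u ∈ T | G.Adj y u}) ≤ #Y * (D + 1) :=
    calc _ ≤ #Y + #{y ∈ Y | y ∈ T} * D :=
          (card_union_le _ _).trans <| Nat.add_le_add_left
            (card_biUnion_le_card_mul _ _ _ fun y hy => hD y (mem_filter.1 hy).2) _
      _ ≤ #Y + #Y * D := by gcongr; exact filter_subset _ _
      _ = #Y * (D + 1) := by ring
  obtain ⟨w, hwW, hw⟩ := exists_mem_notMem_of_card_lt_card (hcard.trans_lt hY)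
  refine ⟨w, hwW, fun h => hw (mem_union_left _ h), fun u hu hwu huY => hw (mem_union_right _ ?_)⟩
  exact mem_biUnion.2 ⟨u, mem_filter.2 ⟨huY, hu⟩, mem_filter.2 ⟨hWT hwW, hwu.symm⟩⟩

lemma hasRobustPaths_sdiff [DecidableEq V] {T B : Finset V} {q K D : ℕ} (hq : q ≤ 3)
    (hD : ∀ w ∈ T, #{u ∈ T | G.Adj w u} ≤ D)
    (hcard : (#B + K) * (D + 1) < #{w ∈ T | q ≤ #{u ∈ T | G.Adj w u} + 1}) :
    HasRobustPaths G (T \ B) q K := by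
  intro F hF p hp hpq
  have hBF : #(B ∪ F) ≤ #B + K := (card_union_le _ _).trans (by omega)
  obtain ⟨w, hw, hwBF, hadj⟩ := exists_mem_forall_adj_notMem (filter_subset _ T) hD
    ((Nat.mul_le_mul_right _ hBF).trans_lt hcard)
  rw [mem_filter] at hw
  obtain ⟨P, hlen, hnd, hchain, hP⟩ := exists_path_in_star (G := G) (X := T \ (B ∪ F))
    (mem_sdiff.2 ⟨hw.1, hwBF⟩)
    (fun u hu => mem_sdiff.2 ⟨(mem_filter.1 hu).1, hadj u (mem_filter.1 hu).1 (mem_filter.1 hu).2⟩)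
    (fun u hu => (mem_filter.1 hu).2) hp (hpq.trans hw.2) (hpq.trans hq)
  exact ⟨P, hlen, hnd, hchain, fun u hu => by have := hP u hu; simp_all⟩

end Embedding

section Counting

open Finset

variable {V : Type*} (G : SimpleGraph V) [DecidableRel G.Adj] (A U : Finset V) (v : V)

/-- The vertices of `A` not adjacent to `v` (among them `v` itself, when `v ∈ A`). -/
def nonNeighborsIn : Finset V := {w ∈ A | ¬G.Adj v w}

/-- The vertices of `A` adjacent to every vertex of `U`. -/
def commonNeighborsIn : Finset V := {w ∈ A | ∀ u ∈ U, G.Adj u w}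

variable {G A U v}

lemma commonNeighborsIn_subset : commonNeighborsIn G A U ⊆ A := filter_subset _ _

lemma adj_of_mem_commonNeighborsIn {u w : V} (hu : u ∈ U) (hw : w ∈ commonNeighborsIn G A U) :
    G.Adj u w := (mem_filter.1 hw).2 u hu

lemma card_nonNeighborsIn_mono {B : Finset V} (h : A ⊆ B) :
    #(nonNeighborsIn G A v) ≤ #(nonNeighborsIn G B v) :=
  card_le_card (filter_subset_filter _ h)

lemma card_sub_le_card_commonNeighborsIn {e : ℝ}
    (he : ∀ u ∈ U, #(nonNeighborsIn G A u) ≤ e) :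
    #A - #U * e ≤ #(commonNeighborsIn G A U) := by
  classical
  have hsdiff : A \ U.biUnion (nonNeighborsIn G A) ⊆ commonNeighborsIn G A U := by
    intro w hw
    obtain ⟨hwA, hwU⟩ := mem_sdiff.1 hw
    exact mem_filter.2 ⟨hwA, fun u hu => by_contra fun h =>
      hwU (mem_biUnion.2 ⟨u, hu, mem_filter.2 ⟨hwA, h⟩⟩)⟩
  have hA : (#A : ℝ) ≤ #(commonNeighborsIn G A U) + #(U.biUnion (nonNeighborsIn G A)) := by
    exact_mod_cast tsub_le_iff_right.1 ((le_card_sdiff _ _).trans (card_le_card hsdiff))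
  have hU : (#(U.biUnion (nonNeighborsIn G A)) : ℝ) ≤ #U * e :=
    calc _ ≤ ∑ u ∈ U, (#(nonNeighborsIn G A u) : ℝ) := by exact_mod_cast card_biUnion_le
      _ ≤ #U • e := sum_le_card_nsmul _ _ _ he
      _ = #U * e := nsmul_eq_mul _ _
  linarith

lemma card_commonNeighborsIn_le_of_not_containsCopy_wheelGraph {k : ℕ}
    (hG : ¬ContainsCopy (wheelGraph (2 * k + 1)) G) (hU : #U = k) (hvU : ∀ u ∈ U, G.Adj v u)
    (hvA : ∀ w ∈ A, G.Adj v w) : #(commonNeighborsIn G A U) ≤ 2 * k := by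
  by_contra! h
  exact hG <| containsCopy_wheelGraph_of_completeBipartite hU h hvU
    (fun w hw => hvA w (commonNeighborsIn_subset hw)) fun _ hu _ => adj_of_mem_commonNeighborsIn hu

lemma sum_choose_card_neighbors_le {k m : ℕ}
    (h : ∀ U ∈ A.powersetCard k, #(commonNeighborsIn G A U) ≤ m) :
    ∑ w ∈ A, (#{u ∈ A | G.Adj w u}).choose k ≤ (#A).choose k * m := by
  classical
  calc ∑ w ∈ A, (#{u ∈ A | G.Adj w u}).choose k
      = ∑ w ∈ A, #{U ∈ A.powersetCard k | ∀ u ∈ U, G.Adj u w} := by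
        refine sum_congr rfl fun w _ => ?_
        rw [← card_powersetCard]
        congr 1
        ext U
        simp only [mem_powersetCard, mem_filter, subset_iff, G.adj_comm w]
        grind
    _ = ∑ U ∈ A.powersetCard k, #(commonNeighborsIn G A U) :=
        sum_card_bipartiteAbove_eq_sum_card_bipartiteBelow (fun w U => ∀ u ∈ U, G.Adj u w)
    _ ≤ #(A.powersetCard k) • m := sum_le_card_nsmul _ _ _ h
    _ = (#A).choose k * m := by rw [card_powersetCard, smul_eq_mul]

end Counting

section KovariSosTuran

open Filter Finset
open scoped Classical

lemma eventually_le_mul_natCast {ε : ℝ} (hε : 0 < ε) (c : ℝ) : ∀ᶠ n : ℕ in atTop, c ≤ ε * n :=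
  (tendsto_natCast_atTop_atTop.const_mul_atTop hε).eventually_ge_atTop c

lemma le_add_mul_choose {d k n : ℕ} {y : ℝ} (hdn : d ≤ n) (hy : 0 < y) (hky : 2 * k ≤ y) :
    (d : ℝ) ≤ y + n * (d.choose k * (k.factorial * 2 ^ k / y ^ k)) := by
  rcases le_or_gt (d : ℝ) y with hd | hd
  · exact hd.trans (le_add_of_nonneg_right (by positivity))
  have hkd : k ≤ d := by exact_mod_cast (by linarith : (k : ℝ) ≤ d)
  have hbase : y / 2 ≤ (d + 1 - k : ℕ) := by
    rw [Nat.cast_sub (by omega)]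
    push_cast
    linarith
  have hchoose : (y / 2) ^ k ≤ d.choose k * k.factorial := by
    rw [← div_le_iff₀ (by positivity)]
    exact (by gcongr : (y / 2) ^ k / k.factorial ≤ _).trans (Nat.pow_le_choose k d)
  have hone : 1 ≤ d.choose k * (k.factorial * 2 ^ k / y ^ k) := by
    rw [← mul_div_assoc, ← mul_assoc, one_le_div (by positivity)]
    rwa [div_pow, div_le_iff₀ (by positivity)] at hchoose
  calc (d : ℝ) ≤ n * 1 := by rw [mul_one]; exact_mod_cast hdn
    _ ≤ n * (d.choose k * (k.factorial * 2 ^ k / y ^ k)) := by gcongr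
    _ ≤ _ := le_add_of_nonneg_left hy.le

lemma sum_card_le_of_sum_choose_le {ι : Type*} {s : Finset ι} {d : ι → ℕ} {k m n : ℕ} {y : ℝ}
    (hs : #s ≤ n) (hd : ∀ i ∈ s, d i ≤ n) (hy : 0 < y) (hky : 2 * k ≤ y)
    (hsum : ∑ i ∈ s, (d i).choose k ≤ n ^ k * m) :
    ∑ i ∈ s, (d i : ℝ) ≤ n * (y + m * k.factorial * (2 * n / y) ^ k) :=
  calc ∑ i ∈ s, (d i : ℝ)
      ≤ ∑ i ∈ s, (y + n * ((d i).choose k * (k.factorial * 2 ^ k / y ^ k))) :=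
        sum_le_sum fun i hi => le_add_mul_choose (hd i hi) hy hky
    _ = #s * y + n * ((∑ i ∈ s, (d i).choose k : ℕ) * (k.factorial * 2 ^ k / y ^ k)) := by
        rw [sum_add_distrib, sum_const, nsmul_eq_mul, ← mul_sum, ← sum_mul, Nat.cast_sum]
    _ ≤ n * y + n * ((n ^ k * m : ℕ) * (k.factorial * 2 ^ k / y ^ k)) := by gcongr
    _ = n * (y + m * k.factorial * (2 * n / y) ^ k) := by
        push_cast
        rw [div_pow, mul_pow]
        ring

-- A neighbourhood in a wheel-free graph is `K_{k,2k+1}`-free.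
lemma eventually_sum_card_neighbors_le (k : ℕ) {ε : ℝ} (hε : 0 < ε) :
    ∀ᶠ n : ℕ in atTop, ∀ G : SimpleGraph (Fin n), WheelFree (2 * k + 1) G → ∀ z,
      ∑ w ∈ G.neighborFinset z, (degIn G (G.neighborFinset z) w : ℝ) ≤ ε * n ^ 2 := by
  set C : ℝ := 2 * k * k.factorial * (4 / ε) ^ k
  filter_upwards [eventually_le_mul_natCast hε (2 * C), eventually_le_mul_natCast hε (4 * k),
    eventually_gt_atTop 0] with n hC hk hn G hG z
  have hn' : (0 : ℝ) < n := by exact_mod_cast hn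
  have hle (B : Finset (Fin n)) : #B ≤ n := by simpa using card_le_univ B
  have hchoose : ∑ w ∈ G.neighborFinset z, (degIn G (G.neighborFinset z) w).choose k ≤
      n ^ k * (2 * k) := by
    refine (sum_choose_card_neighbors_le fun U hU => ?_).trans
      (Nat.mul_le_mul_right _ ((Nat.choose_le_pow _ _).trans (Nat.pow_le_pow_left (hle _) k)))
    rw [mem_powersetCard] at hU
    exact card_commonNeighborsIn_le_of_not_containsCopy_wheelGraph hG hU.2
      (fun u hu => by simpa using hU.1 hu) (fun w hw => by simpa using hw)
  calc ∑ w ∈ G.neighborFinset z, (degIn G (G.neighborFinset z) w : ℝ)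
      ≤ n * (ε * n / 2 + (2 * k : ℕ) * k.factorial * (2 * n / (ε * n / 2)) ^ k) :=
        sum_card_le_of_sum_choose_le (hle _) (fun w _ => hle _) (half_pos (mul_pos hε hn'))
          (by linarith) hchoose
    _ = n * (ε * n / 2 + C) := by
        have : 2 * (n : ℝ) / (ε * n / 2) = 4 / ε := by field_simp; norm_num
        rw [this]
        push_cast
        rfl
    _ ≤ n * (ε * n / 2 + ε * n / 2) := by gcongr; linarith
    _ = ε * n ^ 2 := by ring

end KovariSosTuran

section RegularGraphs

open Finset SimpleGraph
open scoped Classical Pointwise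

lemma isRegularOfDegree_circulantGraph {Γ : Type*} [AddCommGroup Γ] [DecidableEq Γ] {J : Finset Γ}
    [(circulantGraph (J : Set Γ)).LocallyFinite] (h₀ : 0 ∉ J) (hJ : Disjoint J (-J)) :
    (circulantGraph (J : Set Γ)).IsRegularOfDegree (2 * #J) := by
  intro v
  have hN : (circulantGraph (J : Set Γ)).neighborFinset v = (J ∪ -J).map (addRightEmbedding v) := by
    ext u
    simp only [mem_neighborFinset, circulantGraph_adj, mem_coe, mem_map, mem_union, Finset.mem_neg',
      addRightEmbedding_apply]
    constructor
    · rintro ⟨-, h | h⟩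
      · exact ⟨u - v, .inr (by simpa), by simp⟩
      · exact ⟨u - v, .inl h, by simp⟩
    · rintro ⟨w, hw, rfl⟩
      refine ⟨fun h => ?_, by simpa [or_comm] using hw⟩
      simp_all
  rw [← card_neighborFinset_eq_degree, hN, card_map, card_union_of_disjoint hJ, card_neg, two_mul]

lemma exists_zmod_isRegularOfDegree_two_mul {h s : ℕ} [NeZero s] (hs : 2 * h < s) :
    ∃ R : SimpleGraph (ZMod s), R.IsRegularOfDegree (2 * h) := by
  have hcast (a : ℕ) (ha₀ : 0 < a) (ha : a < s) : (a : ZMod s) ≠ 0 := by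
    rw [Ne, ZMod.natCast_eq_zero_iff]
    exact Nat.not_dvd_of_pos_of_lt ha₀ ha
  have hcard : #((Icc 1 h).image (Nat.cast : ℕ → ZMod s)) = h := by
    rw [card_image_of_injOn, Nat.card_Icc, Nat.add_sub_cancel]
    intro a ha b hb hab
    simp only [coe_Icc, Set.mem_Icc] at ha hb
    exact Nat.ModEq.eq_of_lt_of_lt ((ZMod.natCast_eq_natCast_iff _ _ _).1 hab) (by omega) (by omega)
  have h₀ : 0 ∉ (Icc 1 h).image (Nat.cast : ℕ → ZMod s) := by
    rintro h₀
    obtain ⟨a, ha, ha₀⟩ := mem_image.1 h₀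
    rw [mem_Icc] at ha
    exact hcast a (by omega) (by omega) ha₀
  have hdisj : Disjoint ((Icc 1 h).image (Nat.cast : ℕ → ZMod s)) (-(Icc 1 h).image Nat.cast) := by
    rw [Finset.disjoint_left]
    intro x hx hx'
    obtain ⟨a, ha, rfl⟩ := mem_image.1 hx
    obtain ⟨b, hb, hab⟩ := mem_image.1 (Finset.mem_neg'.1 hx')
    rw [mem_Icc] at ha hb
    refine hcast (a + b) (by omega) (by omega) ?_
    rw [Nat.cast_add, hab, add_neg_cancel]
  have hreg := isRegularOfDegree_circulantGraph h₀ hdisj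
  rw [hcard] at hreg
  exact ⟨_, by convert hreg⟩

variable {V W X : Type*} {F : SimpleGraph X}

lemma free_of_card_lt [Fintype X] [Fintype V] {G : SimpleGraph V}
    (h : Fintype.card V < Fintype.card X) : F.Free G :=
  fun ⟨f⟩ => h.not_ge (Fintype.card_le_of_injective f f.injective)

lemma free_sum_of_connected {G : SimpleGraph V} {H : SimpleGraph W} (hF : F.Connected)
    (hG : F.Free G) (hH : F.Free H) : F.Free (G ⊕g H) := by
  rintro ⟨f⟩
  have hreach (a b : X) : (G ⊕g H).Reachable (f a) (f b) := (hF.preconnected a b).map f.toHom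
  obtain ⟨x⟩ := hF.nonempty
  cases hx : f x with
  | inl v =>
    have hinl (a : X) : ∃ v, f a = .inl v := by
      cases ha : f a with
      | inl v => exact ⟨v, rfl⟩
      | inr w => exact absurd (hx ▸ ha ▸ hreach x a) (not_reachable_sum_inl_inr v w)
    choose g hg using hinl
    refine hG ⟨⟨⟨g, fun {a b} hab => ?_⟩, fun a b hab => f.injective ?_⟩⟩
    · rw [← sum_adj_inl (H := H), ← hg, ← hg]
      exact f.toHom.map_adj hab
    · exact (hg a).trans ((congrArg _ hab).trans (hg b).symm)
  | inr w =>
    have hinr (a : X) : ∃ w, f a = .inr w := by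
      cases ha : f a with
      | inl v => exact absurd (hx ▸ ha ▸ hreach a x) (not_reachable_sum_inl_inr v w)
      | inr w => exact ⟨w, rfl⟩
    choose g hg using hinr
    refine hH ⟨⟨⟨g, fun {a b} hab => ?_⟩, fun a b hab => f.injective ?_⟩⟩
    · rw [← sum_adj_inr (G := G), ← hg, ← hg]
      exact f.toHom.map_adj hab
    · exact (hg a).trans ((congrArg _ hab).trans (hg b).symm)

lemma isRegularOfDegree_sum {G : SimpleGraph V} {H : SimpleGraph W} [G.LocallyFinite]
    [H.LocallyFinite] [(G ⊕g H).LocallyFinite] {d : ℕ}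
    (hG : G.IsRegularOfDegree d) (hH : H.IsRegularOfDegree d) : (G ⊕g H).IsRegularOfDegree d := by
  rintro (v | w)
  · rw [← hG.degree_eq v, ← card_neighborSet_eq_degree, ← card_neighborSet_eq_degree,
      ← Nat.card_eq_fintype_card, ← Nat.card_eq_fintype_card, neighborSet_sum_inl,
      Nat.card_image_of_injective Sum.inl_injective]
  · rw [← hH.degree_eq w, ← card_neighborSet_eq_degree, ← card_neighborSet_eq_degree,
      ← Nat.card_eq_fintype_card, ← Nat.card_eq_fintype_card, neighborSet_sum_inr,
      Nat.card_image_of_injective Sum.inr_injective]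

lemma exists_fin_isRegularOfDegree_and_free [Fintype V] {R : SimpleGraph V} [R.LocallyFinite]
    {d s : ℕ} (hR : R.IsRegularOfDegree d) (hF : F.Free R) (hs : Fintype.card V = s) :
    ∃ R' : SimpleGraph (Fin s), R'.IsRegularOfDegree d ∧ F.Free R' := by
  let e := Iso.map (Fintype.equivFinOfCardEq hs) R
  refine ⟨_, fun v => ?_, (free_congr_right e).1 hF⟩
  obtain ⟨u, rfl⟩ := e.surjective v
  rw [e.degree_eq, hR.degree_eq]

-- Split off copies of `K_{d+1}` until fewer than `2(d+1)` vertices remain.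
lemma exists_isRegularOfDegree_and_free [Fintype X] (hF : F.Connected) {d : ℕ}
    (hd : 2 * d + 1 < Fintype.card X) (s : ℕ) (hs : d + 1 ≤ s) (hds : Even d ∨ d + 1 ∣ s) :
    ∃ R : SimpleGraph (Fin s), R.IsRegularOfDegree d ∧ F.Free R := by
  induction s using Nat.strong_induction_on with
  | _ s ih =>
  have htop : (⊤ : SimpleGraph (Fin (d + 1))).IsRegularOfDegree d := by
    simpa using IsRegularOfDegree.top (V := Fin (d + 1))
  have htopF : F.Free (⊤ : SimpleGraph (Fin (d + 1))) :=
    free_of_card_lt (by rw [Fintype.card_fin]; omega)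
  rcases lt_or_ge s (2 * (d + 1)) with hlt | hge
  · rcases hds with ⟨h, rfl⟩ | ⟨c, rfl⟩
    · have : NeZero s := ⟨by omega⟩
      obtain ⟨R, hR⟩ := exists_zmod_isRegularOfDegree_two_mul (h := h) (s := s) (by omega)
      rw [← two_mul]
      exact exists_fin_isRegularOfDegree_and_free hR
        (free_of_card_lt (by rw [ZMod.card]; omega)) (ZMod.card s)
    · obtain rfl : c = 1 := by
        have := lt_of_mul_lt_mul_left ((mul_comm 2 (d + 1)).symm ▸ hlt) (Nat.zero_le _)
        have := Nat.pos_of_ne_zero (fun hc : c = 0 => by simp [hc] at hs)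
        omega
      rw [mul_one]
      exact ⟨⊤, by convert htop, htopF⟩
  · obtain ⟨R, hR, hRF⟩ := ih (s - (d + 1)) (by omega) (by omega)
      (hds.imp_right fun h => Nat.dvd_sub h dvd_rfl)
    have hsum := isRegularOfDegree_sum hR htop
    have hcard : Fintype.card (Fin (s - (d + 1)) ⊕ Fin (d + 1)) = s := by
      rw [Fintype.card_sum, Fintype.card_fin, Fintype.card_fin]
      omega
    exact exists_fin_isRegularOfDegree_and_free hsum (free_sum_of_connected hF hRF htopF) hcard

end RegularGraphs

section Construction

open Finset SimpleGraph Matrix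
open scoped Classical

/-- The join of `R` with an independent set on `W`. For `R` regular of degree `k - 1` this is the
graph whose spectral radius bounds that of an extremal graph from below. -/
def joinIndependent {V : Type*} (R : SimpleGraph V) (W : Type*) : SimpleGraph (V ⊕ W) :=
  (R ⊕g ⊥) ⊔ completeBipartiteGraph V W

section

variable {V W : Type*} {R : SimpleGraph V}

@[simp]
lemma joinIndependent_adj_inl_inl {a b : V} :
    (joinIndependent R W).Adj (.inl a) (.inl b) ↔ R.Adj a b := by
  simp [joinIndependent]

@[simp]
lemma joinIndependent_adj_inl_inr {a : V} {b : W} :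
    (joinIndependent R W).Adj (.inl a) (.inr b) := by
  simp [joinIndependent]

@[simp]
lemma joinIndependent_adj_inr_inl {a : W} {b : V} :
    (joinIndependent R W).Adj (.inr a) (.inl b) := by
  simp [joinIndependent]

@[simp]
lemma not_joinIndependent_adj_inr_inr {a b : W} :
    ¬ (joinIndependent R W).Adj (.inr a) (.inr b) := by
  simp [joinIndependent]

lemma wheelGraph_adj_zero_succ {m : ℕ} (i : Fin m) : (wheelGraph (m + 1)).Adj 0 i.succ :=
  ⟨i.succ_ne_zero.symm, .inl rfl⟩

lemma wheelGraph_adj_succ_succ {m : ℕ} {i j : Fin m} (hij : i.val + 1 = j) :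
    (wheelGraph (m + 1)).Adj i.succ j.succ :=
  ⟨fun h => by rw [Fin.succ_inj] at h; omega, .inr (.inr (.inl (by simp [hij])))⟩

-- Each of the `k` rim edges `{2i+1, 2i+2}` has an end in `V`, and this is a neighbour of the hub.
lemma le_degree_of_wheelGraph_hub_inl [Fintype V] {k : ℕ} {f : Fin (2 * k + 1) ↪ V ⊕ W}
    (hf : ∀ a b, (wheelGraph (2 * k + 1)).Adj a b → (joinIndependent R W).Adj (f a) (f b))
    {v : V} (hv : f 0 = .inl v) : k ≤ R.degree v := by
  have hsel (i : Fin k) :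
      ∃ j : Fin (2 * k), j.val / 2 = i ∧ ∃ u, f j.succ = .inl u ∧ R.Adj v u := by
    let j₁ : Fin (2 * k) := ⟨2 * i, by omega⟩
    let j₂ : Fin (2 * k) := ⟨2 * i + 1, by omega⟩
    have hadj := hf _ _ (wheelGraph_adj_succ_succ (i := j₁) (j := j₂) rfl)
    have hadj₁ := hv ▸ hf _ _ (wheelGraph_adj_zero_succ j₁)
    have hadj₂ := hv ▸ hf _ _ (wheelGraph_adj_zero_succ j₂)
    cases h₁ : f j₁.succ with
    | inl a => exact ⟨j₁, by simp only [j₁]; omega, a, h₁, by simpa [h₁] using hadj₁⟩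
    | inr a =>
      cases h₂ : f j₂.succ with
      | inl b => exact ⟨j₂, by simp only [j₂]; omega, b, h₂, by simpa [h₂] using hadj₂⟩
      | inr b => simp [h₁, h₂] at hadj
  choose j hj u hu hvu using hsel
  have hinj : Function.Injective u := fun a b hab => by
    have hjab : j a = j b := Fin.succ_injective _ (f.injective (by rw [hu, hu, hab]))
    exact Fin.ext (by rw [← hj a, ← hj b, hjab])
  simpa using card_le_card_of_injOn (s := univ) (t := R.neighborFinset v) u
    (fun i _ => by simpa using hvu i) hinj.injOn

-- The rim lies in `V`.
lemma pathGraph_isContained_of_wheelGraph_hub_inr {m : ℕ} {f : Fin (m + 1) ↪ V ⊕ W}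
    (hf : ∀ a b, (wheelGraph (m + 1)).Adj a b → (joinIndependent R W).Adj (f a) (f b))
    {w : W} (hw : f 0 = .inr w) : pathGraph m ⊑ R := by
  have hinl (i : Fin m) : ∃ u, f i.succ = .inl u := by
    have h := hw ▸ hf _ _ (wheelGraph_adj_zero_succ i)
    cases hi : f i.succ with
    | inl u => exact ⟨u, rfl⟩
    | inr u => simp [hi] at h
  choose u hu using hinl
  have hadj (i j : Fin m) (hij : i.val + 1 = j) : R.Adj (u i) (u j) := by
    simpa [hu] using hf _ _ (wheelGraph_adj_succ_succ hij)
  refine ⟨⟨⟨u, fun {i j} hij => ?_⟩, fun i j hij => ?_⟩⟩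
  · exact (pathGraph_adj.1 hij).elim (hadj i j) fun h => (hadj j i h).symm
  · exact Fin.succ_injective _ (f.injective ((hu i).trans ((congrArg _ hij).trans (hu j).symm)))

lemma not_containsCopy_wheelGraph_joinIndependent [Fintype V] {k : ℕ}
    (hdeg : ∀ v, R.degree v < k) (hpath : (pathGraph (2 * k)).Free R) :
    ¬ContainsCopy (wheelGraph (2 * k + 1)) (joinIndependent R W) := by
  rintro ⟨f, hf⟩
  cases h : f 0 with
  | inl v => exact (hdeg v).not_ge (le_degree_of_wheelGraph_hub_inl hf h)
  | inr w => exact hpath (pathGraph_isContained_of_wheelGraph_hub_inr hf h)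

lemma dotProduct_adjMatrix_joinIndependent_mulVec [Fintype V] [Fintype W] {d : ℕ}
    (hR : R.IsRegularOfDegree d) (a b : ℝ) :
    (Sum.elim (fun _ => a) fun _ => b) ⬝ᵥ (joinIndependent R W).adjMatrix ℝ *ᵥ
      (Sum.elim (fun _ => a) fun _ => b) =
    Fintype.card V * (d * a + 2 * Fintype.card W * b) * a := by
  have hdeg (v : V) : (#{u | R.Adj v u} : ℝ) = d := by
    rw [← hR.degree_eq v, ← card_neighborFinset_eq_degree, neighborFinset_eq_filter]
  have hl (v : V) : ((joinIndependent R W).adjMatrix ℝ *ᵥ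
      (Sum.elim (fun _ => a) fun _ => b)) (.inl v) = d * a + Fintype.card W * b := by
    simp only [mulVec, dotProduct, Fintype.sum_sum_type, adjMatrix_apply]
    simp [Finset.sum_ite, hdeg]
  have hr (w : W) : ((joinIndependent R W).adjMatrix ℝ *ᵥ
      (Sum.elim (fun _ => a) fun _ => b)) (.inr w) = Fintype.card V * a := by
    simp [mulVec, dotProduct, Fintype.sum_sum_type, adjMatrix_apply]
  simp only [dotProduct, Fintype.sum_sum_type, hl, hr, Sum.elim_inl, Sum.elim_inr, sum_const,
    card_univ, nsmul_eq_mul]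
  ring

end

namespace IsSpexWheel

variable {n : ℕ} {G : SimpleGraph (Fin n)}

lemma dotProduct_adjMatrix_mulVec_le {t : ℕ} (hG : IsSpexWheel t G) {X : Type*} [Fintype X]
    {H : SimpleGraph X} (hX : Fintype.card X = n) (hH : ¬ContainsCopy (wheelGraph t) H)
    (y : X → ℝ) : y ⬝ᵥ H.adjMatrix ℝ *ᵥ y ≤ lam1 G * (y ⬝ᵥ y) := by
  let e := Fintype.equivFinOfCardEq hX
  obtain ⟨H', hH'⟩ : ∃ H' : SimpleGraph (Fin n), ∀ a b, H'.Adj a b ↔ H.Adj (e.symm a) (e.symm b) :=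
    ⟨H.comap e.symm, fun _ _ => Iff.rfl⟩
  have hfree : WheelFree t H' := fun ⟨f, hf⟩ =>
    hH ⟨f.trans e.symm.toEmbedding, fun a b hab => (hH' _ _).1 (hf a b hab)⟩
  have hadj : H'.adjMatrix ℝ = (H.adjMatrix ℝ).submatrix e.symm e.symm := by
    ext a b
    simp [adjMatrix_apply, hH']
  have hy := dotProduct_adjMatrix_mulVec_le_lam1 H' (y ∘ e.symm)
  rw [hadj, submatrix_mulVec_equiv, comp_equiv_dotProduct_comp_equiv,
    comp_equiv_dotProduct_comp_equiv, Equiv.symm_symm, Function.comp_assoc, Equiv.symm_comp_self,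
    Function.comp_id] at hy
  exact hy.trans (mul_le_mul_of_nonneg_right (hG.2 _ hfree) (dotProduct_self_star_nonneg y))

lemma mul_le_lam1_mul_sub {k : ℕ} (hG : IsSpexWheel (2 * k + 1) G) (hk : 2 ≤ k) {s t : ℕ}
    (hst : s + t = n) (hs : k ≤ s) (hks : Odd k ∨ k ∣ s) :
    (k : ℝ) - 1 ≤ lam1 G ∧ (s * t : ℝ) ≤ lam1 G * (lam1 G - (k - 1)) := by
  have hconn : (pathGraph (2 * k)).Connected := by
    convert pathGraph_connected (2 * k - 1) using 2 <;> omega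
  obtain ⟨R, hR, hpath⟩ := exists_isRegularOfDegree_and_free hconn (d := k - 1)
    (by rw [Fintype.card_fin]; omega) s (by omega)
    (by rwa [Nat.sub_add_cancel (by omega), Nat.even_sub' (by omega), iff_true_right odd_one])
  have hfree := not_containsCopy_wheelGraph_joinIndependent (W := Fin t)
    (fun v => by rw [hR.degree_eq v]; omega) hpath
  have hform (a b : ℝ) : s * ((k - 1) * a + 2 * t * b) * a ≤ lam1 G * (s * a ^ 2 + t * b ^ 2) := by
    have h := hG.dotProduct_adjMatrix_mulVec_le (by simpa) hfree (Sum.elim (fun _ => a) fun _ => b)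
    rw [dotProduct_adjMatrix_joinIndependent_mulVec hR, Nat.cast_sub (by omega)] at h
    simpa [dotProduct, Fintype.sum_sum_type, ← sq] using h
  have hs₀ : (0 : ℝ) < s := by
    exact_mod_cast (show 0 < s by omega)
  have hle : (k : ℝ) - 1 ≤ lam1 G := by
    refine le_of_mul_le_mul_left ?_ hs₀
    linarith [hform 1 0]
  refine ⟨hle, ?_⟩
  have hlam : 0 < lam1 G * s := by
    have : (2 : ℝ) ≤ k := by exact_mod_cast hk
    exact mul_pos (by linarith) hs₀
  refine le_of_mul_le_mul_left ?_ hlam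
  linarith [hform (lam1 G) s]

lemma half_le_lam1_and_le_lam1_mul_sub {k : ℕ} (hG : IsSpexWheel (2 * k + 1) G) (hk : 2 ≤ k)
    (hn : 4 * k < n) :
    (n : ℝ) / 2 ≤ lam1 G ∧ (n : ℝ) ^ 2 / 4 - k ^ 2 ≤ lam1 G * (lam1 G - (k - 1)) := by
  set s := k * (n / 2 / k) with hs
  have hs_le : s ≤ n / 2 := Nat.mul_div_le _ _
  have hlt_s : n / 2 < s + k := by
    have := Nat.div_add_mod (n / 2) k
    have := Nat.mod_lt (n / 2) (show 0 < k by omega)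
    omega
  obtain ⟨hle, h⟩ := hG.mul_le_lam1_mul_sub hk (show s + (n - s) = n by omega) (by omega)
    (.inr ⟨_, hs⟩)
  have hk' : (2 : ℝ) ≤ k := by exact_mod_cast hk
  have hn' : (4 : ℝ) * k < n := by exact_mod_cast hn
  have hprod : (n : ℝ) ^ 2 / 4 - k ^ 2 ≤ lam1 G * (lam1 G - (k - 1)) := by
    refine le_trans ?_ h
    have hs₁ : (n : ℝ) < 2 * s + 2 * k := by
      exact_mod_cast (show n < 2 * s + 2 * k by omega)
    have hs₂ : (2 : ℝ) * s ≤ n := by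
      exact_mod_cast (show 2 * s ≤ n by omega)
    rw [Nat.cast_sub (by omega)]
    nlinarith
  refine ⟨?_, hprod⟩
  by_contra! hlt
  have : lam1 G * (lam1 G - (k - 1)) ≤ (n : ℝ) / 2 * (n / 2 - (k - 1)) :=
    mul_le_mul hlt.le (by linarith) (by linarith) (by positivity)
  nlinarith

end IsSpexWheel

end Construction

section NeighborhoodReplacement

open Finset SimpleGraph Matrix
open scoped Classical

/-- The graph obtained from `G` by making `N \ {v}` the neighbourhood of `v`. -/
def replaceNeighborhood {V : Type*} (G : SimpleGraph V) (v : V) (N : Finset V) : SimpleGraph V :=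
  .fromRel fun a b => (a ≠ v ∧ b ≠ v ∧ G.Adj a b) ∨ (a = v ∧ b ∈ N)

lemma replaceNeighborhood_adj_of_ne {V : Type*} {G : SimpleGraph V} {v : V} {N : Finset V} {a b : V}
    (ha : a ≠ v) (hb : b ≠ v) : (replaceNeighborhood G v N).Adj a b ↔ G.Adj a b := by
  have := G.ne_of_adj (a := a) (b := b)
  simp only [replaceNeighborhood, fromRel_adj, G.adj_comm b a]
  tauto

lemma replaceNeighborhood_adj_self {V : Type*} {G : SimpleGraph V} {v : V} {N : Finset V} {b : V} :
    (replaceNeighborhood G v N).Adj v b ↔ b ≠ v ∧ b ∈ N := by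
  simp only [replaceNeighborhood, fromRel_adj]
  grind

-- In a copy of `F` using `v`, a vertex of `S` adjacent to all of `N` that matter can replace `v`.
lemma not_containsCopy_replaceNeighborhood {α V : Type*} [Fintype α] {F : SimpleGraph α}
    {G : SimpleGraph V} {v : V} {S N : Finset V} {e : ℝ} (hG : ¬ContainsCopy F G)
    (hN : ∀ u ∈ N, #(nonNeighborsIn G S u) ≤ e) (he : 0 ≤ e)
    (hS : Fintype.card α * (e + 1) < #S) : ¬ContainsCopy F (replaceNeighborhood G v N) := by
  rintro ⟨f, hf⟩
  have hrange : #(univ.map f) = Fintype.card α := by rw [card_map, card_univ]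
  have hU : (#{u ∈ univ.map f | u ∈ N} : ℝ) ≤ Fintype.card α := by
    exact_mod_cast (card_filter_le _ _).trans hrange.le
  have hcommon := card_sub_le_card_commonNeighborsIn (G := G) (A := S)
    (U := {u ∈ univ.map f | u ∈ N}) fun u hu => hN u (mem_filter.1 hu).2
  obtain ⟨v', hv', hv'f⟩ := exists_mem_notMem_of_card_lt_card
    (show #(univ.map f) < #(commonNeighborsIn G S {u ∈ univ.map f | u ∈ N}) by
      rw [hrange, ← Nat.cast_lt (α := ℝ)]
      nlinarith)
  have hadj (j : α) (hj : f j ∈ N) : G.Adj (f j) v' :=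
    adj_of_mem_commonNeighborsIn (by simp [hj]) hv'
  have hne (j : α) : f j ≠ v' := fun h => hv'f (by simp [← h])
  refine hG ⟨⟨fun j => if f j = v then v' else f j, fun a b hab => ?_⟩, fun a b hab => ?_⟩
  · have := hne a
    have := hne b
    exact f.injective (by grind)
  · have hab' := hf a b hab
    change G.Adj (if f a = v then v' else f a) (if f b = v then v' else f b)
    split_ifs with ha hb hb
    · exact absurd (ha.trans hb.symm) hab'.ne
    · exact (hadj b (replaceNeighborhood_adj_self.1 (ha ▸ hab')).2).symm
    · exact hadj a (replaceNeighborhood_adj_self.1 (hb ▸ hab'.symm)).2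
    · exact (replaceNeighborhood_adj_of_ne ha hb).1 hab'

lemma dotProduct_adjMatrix_mulVec_add_single {V : Type*} [Fintype V] [DecidableEq V]
    (G : SimpleGraph V) (z : V → ℝ) (v : V) (c : ℝ) :
    (z + Pi.single v c) ⬝ᵥ G.adjMatrix ℝ *ᵥ (z + Pi.single v c) =
      z ⬝ᵥ G.adjMatrix ℝ *ᵥ z + 2 * c * ∑ u ∈ G.neighborFinset v, z u := by
  have hsymm : z ⬝ᵥ G.adjMatrix ℝ *ᵥ Pi.single v c = c * ∑ u ∈ G.neighborFinset v, z u := by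
    rw [dotProduct_mulVec, ← mulVec_transpose, transpose_adjMatrix, dotProduct_single,
      adjMatrix_mulVec_apply, mul_comm]
  rw [mulVec_add, dotProduct_add, add_dotProduct, add_dotProduct, hsymm, single_dotProduct,
    single_dotProduct, adjMatrix_mulVec_apply, adjMatrix_mulVec_apply,
    sum_eq_zero (s := G.neighborFinset v) (f := (Pi.single v c : V → ℝ))
      fun u hu => Pi.single_eq_of_ne ((mem_neighborFinset _ _ _).1 hu).ne' _]
  ring

lemma dotProduct_add_single_self {V : Type*} [Fintype V] [DecidableEq V] {z : V → ℝ} {v : V}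
    (hz : z v = 0) (c : ℝ) :
    (z + Pi.single v c) ⬝ᵥ (z + Pi.single v c) = z ⬝ᵥ z + c ^ 2 := by
  simp [dotProduct_add, add_dotProduct, hz, sq]

lemma dotProduct_adjMatrix_replaceNeighborhood_mulVec {V : Type*} [Fintype V] (G : SimpleGraph V)
    (N : Finset V) {v : V} {z : V → ℝ} (hz : z v = 0) :
    z ⬝ᵥ (replaceNeighborhood G v N).adjMatrix ℝ *ᵥ z = z ⬝ᵥ G.adjMatrix ℝ *ᵥ z := by
  simp only [dotProduct, mulVec, mul_sum]
  refine sum_congr rfl fun a _ => sum_congr rfl fun b _ => ?_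
  rcases eq_or_ne a v with rfl | ha
  · simp [hz]
  rcases eq_or_ne b v with rfl | hb
  · simp [hz]
  simp [adjMatrix_apply, replaceNeighborhood_adj_of_ne ha hb]

variable {n : ℕ} {G : SimpleGraph (Fin n)} {x : Fin n → ℝ}

lemma IsPerronVector.dotProduct_adjMatrix_mulVec_update (hx : IsPerronVector G x) (v : Fin n) :
    Function.update x v 0 ⬝ᵥ G.adjMatrix ℝ *ᵥ Function.update x v 0 =
      lam1 G * (Function.update x v 0 ⬝ᵥ Function.update x v 0) - lam1 G * x v ^ 2 := by
  set z := Function.update x v 0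
  have hxz : x = z + Pi.single v (x v) := by
    ext u
    rcases eq_or_ne u v with rfl | hu
    · simp [z]
    · simp [z, hu]
  have hmul : G.adjMatrix ℝ *ᵥ x = lam1 G • x := by
    ext u
    simpa [adjMatrix_mulVec_apply] using hx.sum_neighborFinset u
  have hsum : ∑ u ∈ G.neighborFinset v, z u = lam1 G * x v := by
    rw [← hx.sum_neighborFinset v]
    exact sum_congr rfl fun u hu =>
      Function.update_of_ne ((mem_neighborFinset _ _ _).1 hu).ne' _ _
  have h := congrArg (x ⬝ᵥ ·) hmul
  simp only [dotProduct_smul, smul_eq_mul] at h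
  rw [hxz, dotProduct_adjMatrix_mulVec_add_single,
    dotProduct_add_single_self (Function.update_self _ _ _), hsum] at h
  linarith

-- Optimise the Rayleigh quotient of the modified graph over the entry at `v`.
lemma IsSpexWheel.sum_erase_le {t : ℕ} (hG : IsSpexWheel t G) (hlam : 0 < lam1 G)
    (hx : IsPerronVector G x) (v : Fin n) {S N : Finset (Fin n)} {e : ℝ}
    (hN : ∀ u ∈ N, #(nonNeighborsIn G S u) ≤ e) (he : 0 ≤ e) (hS : t * (e + 1) < #S) :
    ∑ u ∈ N.erase v, x u ≤ lam1 G * x v := by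
  set σ := ∑ u ∈ N.erase v, x u
  have hσ : ∑ u ∈ (replaceNeighborhood G v N).neighborFinset v, Function.update x v 0 u = σ := by
    have hN' : (replaceNeighborhood G v N).neighborFinset v = N.erase v := by
      ext u
      simp [replaceNeighborhood_adj_self]
    rw [hN']
    exact sum_congr rfl fun u hu => Function.update_of_ne (ne_of_mem_erase hu) _ _
  have hle := hG.dotProduct_adjMatrix_mulVec_le (Fintype.card_fin n)
    (not_containsCopy_replaceNeighborhood (v := v) hG.1 hN he (by rwa [Fintype.card_fin]))
    (Function.update x v 0 + Pi.single v (σ / lam1 G))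
  rw [dotProduct_adjMatrix_mulVec_add_single,
    dotProduct_add_single_self (Function.update_self _ _ _),
    dotProduct_adjMatrix_replaceNeighborhood_mulVec _ _ (Function.update_self _ _ _),
    hx.dotProduct_adjMatrix_mulVec_update, hσ] at hle
  have hdiv : lam1 G * (σ / lam1 G) = σ := mul_div_cancel₀ _ hlam.ne'
  refine (abs_le_of_sq_le_sq' ?_ (mul_nonneg hlam.le (hx.nonneg v))).2
  nlinarith

end NeighborhoodReplacement

section Cuts

open Finset SimpleGraph
open scoped Classical

variable {n : ℕ} {G : SimpleGraph (Fin n)} {S T A B : Finset (Fin n)} {v : Fin n}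

lemma degIn_eq_card_filter (G : SimpleGraph (Fin n)) (A : Finset (Fin n)) (v : Fin n) :
    degIn G A v = #{u ∈ A | G.Adj v u} := rfl

lemma degIn_add_card_nonNeighborsIn (G : SimpleGraph (Fin n)) (A : Finset (Fin n)) (v : Fin n) :
    degIn G A v + #(nonNeighborsIn G A v) = #A :=
  card_filter_add_card_filter_not _

lemma degIn_le_card (G : SimpleGraph (Fin n)) (A : Finset (Fin n)) (v : Fin n) :
    degIn G A v ≤ #A := card_filter_le _ _

lemma degIn_union (h : Disjoint A B) (v : Fin n) :
    degIn G (A ∪ B) v = degIn G A v + degIn G B v := by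
  rw [degIn_eq_card_filter, filter_union, card_union_of_disjoint (disjoint_filter_filter h)]
  rfl

lemma degIn_insert_self (G : SimpleGraph (Fin n)) (A : Finset (Fin n)) (v : Fin n) :
    degIn G (insert v A) v = degIn G A v := by
  simp [degIn_eq_card_filter, filter_insert]

lemma degIn_le_degIn_add_card_sdiff (G : SimpleGraph (Fin n)) (hBA : B ⊆ A) (v : Fin n) :
    degIn G A v ≤ degIn G B v + #(A \ B) := by
  have h := degIn_union (G := G) (disjoint_sdiff (s := B) (t := A)) v
  rw [union_sdiff_of_subset hBA] at h
  exact h.trans_le (Nat.add_le_add_left (degIn_le_card _ _ _) _)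

lemma sum_degIn_comm (G : SimpleGraph (Fin n)) (A B : Finset (Fin n)) :
    ∑ u ∈ A, degIn G B u = ∑ u ∈ B, degIn G A u := by
  refine (sum_card_bipartiteAbove_eq_sum_card_bipartiteBelow (s := A) (t := B) G.Adj).trans
    (sum_congr rfl fun u _ => ?_)
  simp only [degIn_eq_card_filter, bipartiteBelow, G.adj_comm u]

lemma cutCount_eq_sum_degIn (G : SimpleGraph (Fin n)) (S : Finset (Fin n)) :
    cutCount G S = ∑ u ∈ S, degIn G Sᶜ u := by
  have hcut : cutCount G S = #{p ∈ S ×ˢ Sᶜ | G.Adj p.1 p.2} := by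
    unfold cutCount
    congr 1
    ext p
    simp only [mem_filter, mem_univ, true_and, mem_product, mem_compl]
    tauto
  rw [hcut, card_filter, sum_product]
  exact sum_congr rfl fun u _ => (card_filter _ _).symm

lemma cutCount_compl (G : SimpleGraph (Fin n)) (S : Finset (Fin n)) :
    cutCount G Sᶜ = cutCount G S := by
  rw [cutCount_eq_sum_degIn, cutCount_eq_sum_degIn, compl_compl, sum_degIn_comm]

namespace IsMaxCut

lemma swap (h : IsMaxCut G S T) : IsMaxCut G T S := by
  obtain ⟨rfl, hmax⟩ := h
  exact ⟨(compl_compl S).symm, fun S' => (hmax S').trans_eq (cutCount_compl G S).symm⟩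

lemma cutCount_eq (h : IsMaxCut G S T) : cutCount G S = ∑ u ∈ S, degIn G T u := by
  rw [cutCount_eq_sum_degIn, h.1]

lemma cutCount_le (h : IsMaxCut G S T) : cutCount G S ≤ #S * #T :=
  h.cutCount_eq.trans_le (sum_le_card_nsmul _ _ _ fun _ _ => degIn_le_card _ _ _)

lemma card_add_card (h : IsMaxCut G S T) : #S + #T = n := by
  rw [h.1, card_add_card_compl, Fintype.card_fin]

lemma degIn_univ (h : IsMaxCut G S T) (v : Fin n) :
    degIn G univ v = degIn G S v + degIn G T v := by
  rw [h.1, ← degIn_union disjoint_compl_right, union_compl]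

-- Moving `v` to the other side does not enlarge the cut.
lemma degIn_le (h : IsMaxCut G S T) (hv : v ∈ S) : degIn G S v ≤ degIn G T v := by
  obtain ⟨rfl, hmax⟩ := h
  have hcut := hmax (S.erase v)
  have hsplit (u : Fin n) : degIn G (Sᶜ ∪ {v}) u = degIn G Sᶜ u + degIn G {v} u :=
    degIn_union (by simpa using hv) u
  rw [cutCount_eq_sum_degIn, cutCount_eq_sum_degIn, ← add_sum_erase _ _ hv, compl_erase,
    insert_eq, union_comm, sum_congr rfl fun u _ => hsplit u, sum_add_distrib,
    sum_degIn_comm _ _ {v}, sum_singleton] at hcut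
  have herase : degIn G S v = degIn G (S.erase v) v := by
    rw [← degIn_insert_self G (S.erase v), insert_erase hv]
  omega

end IsMaxCut

namespace IsPerronVector

variable {x : Fin n → ℝ}

lemma sum_le_card (hx : IsPerronVector G x) (A : Finset (Fin n)) : ∑ u ∈ A, x u ≤ #A := by
  simpa using sum_le_sum fun u (_ : u ∈ A) => hx.le_one u

lemma lam1_mul_le_degIn_univ (hx : IsPerronVector G x) (v : Fin n) :
    lam1 G * x v ≤ degIn G univ v := by
  rw [← hx.sum_neighborFinset, degIn_eq_card_filter, ← neighborFinset_eq_filter]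
  exact hx.sum_le_card _

-- Two steps of the eigenvalue equation from `z` count the edges at `N(z)`; those leaving `N(z)`
-- form a cut.
lemma sq_lam1_le (hx : IsPerronVector G x) (hcut : IsMaxCut G S T) {z : Fin n} (hz : x z = 1) :
    lam1 G ^ 2 ≤
      ∑ w ∈ G.neighborFinset z, (degIn G (G.neighborFinset z) w : ℝ) + cutCount G S := by
  set A := G.neighborFinset z
  have hwalk : lam1 G ^ 2 = ∑ u ∈ A, lam1 G * x u := by
    rw [← mul_sum, hx.sum_neighborFinset, hz, mul_one, sq]
  have hsplit (u : Fin n) : degIn G univ u = degIn G A u + degIn G Aᶜ u := by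
    rw [← degIn_union disjoint_compl_right, union_compl]
  calc lam1 G ^ 2 ≤ ∑ u ∈ A, (degIn G univ u : ℝ) :=
        hwalk.trans_le (sum_le_sum fun u _ => hx.lam1_mul_le_degIn_univ u)
    _ = ∑ u ∈ A, (degIn G A u : ℝ) + cutCount G A := by
        simp only [hsplit, cutCount_eq_sum_degIn, Nat.cast_add, Nat.cast_sum, sum_add_distrib]
    _ ≤ ∑ u ∈ A, (degIn G A u : ℝ) + cutCount G S := by
        gcongr
        exact hcut.2 A

end IsPerronVector

end Cuts

section Stability

open Finset SimpleGraph
open scoped Classical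

variable {n k : ℕ} {G : SimpleGraph (Fin n)} {S T : Finset (Fin n)} {x : Fin n → ℝ} {e : ℝ}

/-- The vertices of `S` adjacent to all but at most `e` vertices of `T`. -/
noncomputable def typicalVertices (G : SimpleGraph (Fin n)) (S T : Finset (Fin n)) (e : ℝ) :
    Finset (Fin n) := {u ∈ S | #(nonNeighborsIn G T u) ≤ e}

/-- `G` differs little from a balanced complete bipartite graph with parts `S` and `T`: the parts
have at most `n / 2 + e` vertices, of which at most `e` miss more than `e` vertices of the other
part. Edges inside the parts are not restricted. -/
structure IsNearlyCompleteBipartite (G : SimpleGraph (Fin n)) (S T : Finset (Fin n)) (e : ℝ) :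
    Prop where
  card_left_le : #S ≤ (n : ℝ) / 2 + e
  card_right_le : #T ≤ (n : ℝ) / 2 + e
  card_left_sdiff_le : #(S \ typicalVertices G S T e) ≤ e
  card_right_sdiff_le : #(T \ typicalVertices G T S e) ≤ e

lemma card_nonNeighborsIn_le_of_mem_typicalVertices {u : Fin n}
    (hu : u ∈ typicalVertices G S T e) : #(nonNeighborsIn G T u) ≤ e := (mem_filter.1 hu).2

lemma card_sdiff_typicalVertices_le (he : 0 < e)
    (h : (#S * #T : ℝ) ≤ ∑ u ∈ S, (degIn G T u : ℝ) + e ^ 2) :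
    #(S \ typicalVertices G S T e) ≤ e := by
  have hmiss : ∑ u ∈ S, (#(nonNeighborsIn G T u) : ℝ) ≤ e ^ 2 := by
    have hsum : ∑ u ∈ S, (degIn G T u + #(nonNeighborsIn G T u) : ℝ) = #S * #T := by
      simp_rw [← Nat.cast_add, degIn_add_card_nonNeighborsIn]
      simp
    rw [sum_add_distrib] at hsum
    linarith
  have hlarge : #(S \ typicalVertices G S T e) * e ≤ ∑ u ∈ S, (#(nonNeighborsIn G T u) : ℝ) := by
    rw [typicalVertices, ← filter_not, ← nsmul_eq_mul]
    exact (card_nsmul_le_sum _ _ _ fun u hu => (not_le.1 (mem_filter.1 hu).2).le).trans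
      (sum_le_sum_of_subset_of_nonneg (filter_subset _ _) fun _ _ _ => by positivity)
  nlinarith

lemma IsMaxCut.isNearlyCompleteBipartite (hcut : IsMaxCut G S T) (hx : IsPerronVector G x)
    (he : 0 < e) (hlam : (n : ℝ) / 2 ≤ lam1 G)
    (hsum : ∀ z, ∑ w ∈ G.neighborFinset z, (degIn G (G.neighborFinset z) w : ℝ) ≤ e ^ 2) :
    IsNearlyCompleteBipartite G S T e := by
  obtain ⟨z, hz⟩ := hx.exists_eq_one
  have hcutCount : (n : ℝ) ^ 2 / 4 - e ^ 2 ≤ cutCount G S := by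
    nlinarith [hx.sq_lam1_le hcut hz, hsum z, n.cast_nonneg (α := ℝ)]
  have hST : (#S + #T : ℝ) = n := by exact_mod_cast hcut.card_add_card
  have hprod : (cutCount G S : ℝ) ≤ #S * #T := by exact_mod_cast hcut.cutCount_le
  have hdiff : ((#S - n / 2 : ℝ)) ^ 2 ≤ e ^ 2 := by nlinarith
  obtain ⟨hS, hS'⟩ := abs_le.1 (abs_le_of_sq_le_sq hdiff he.le)
  have hbound : (#S * #T : ℝ) ≤ cutCount G S + e ^ 2 := by nlinarith [sq_nonneg (#S - #T : ℝ)]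
  refine ⟨by linarith, by linarith, card_sdiff_typicalVertices_le he ?_,
    card_sdiff_typicalVertices_le he ?_⟩
  · rwa [← Nat.cast_sum, ← hcut.cutCount_eq]
  · rwa [mul_comm, ← Nat.cast_sum, sum_degIn_comm, ← hcut.cutCount_eq]

lemma degIn_lt_or_degIn_le (hG : WheelFree (2 * k + 1) G)
    (hS : ∀ u ∈ S, #(nonNeighborsIn G T u) ≤ e) (v : Fin n) :
    degIn G S v < k ∨ degIn G T v ≤ k * e + 2 * k := by
  rw [or_iff_not_imp_left, not_lt]
  intro hk
  obtain ⟨U, hU, hUk⟩ := exists_subset_card_eq hk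
  have hcommon : (#(commonNeighborsIn G {w ∈ T | G.Adj v w} U) : ℝ) ≤ 2 * k := by
    exact_mod_cast card_commonNeighborsIn_le_of_not_containsCopy_wheelGraph hG hUk
      (fun u hu => (mem_filter.1 (hU hu)).2) (fun w hw => (mem_filter.1 hw).2)
  have hcard := card_sub_le_card_commonNeighborsIn (A := {w ∈ T | G.Adj v w}) (U := U) fun u hu =>
    (Nat.cast_le.2 (card_nonNeighborsIn_mono (filter_subset _ _))).trans
      (hS u (mem_filter.1 (hU hu)).1)
  rw [hUk, ← degIn_eq_card_filter] at hcard
  linarith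

namespace IsNearlyCompleteBipartite

lemma swap (h : IsNearlyCompleteBipartite G S T e) : IsNearlyCompleteBipartite G T S e :=
  ⟨h.2, h.1, h.4, h.3⟩

lemma le_card_left (h : IsNearlyCompleteBipartite G S T e) (hcut : IsMaxCut G S T) :
    (n : ℝ) / 2 - e ≤ #S := by
  have hST : (#S + #T : ℝ) = n := by exact_mod_cast hcut.card_add_card
  linarith [h.card_right_le]

lemma degIn_le_or_degIn_le (h : IsNearlyCompleteBipartite G S T e)
    (hG : WheelFree (2 * k + 1) G) (hk : 1 ≤ k) (he : 2 * k ≤ e) (v : Fin n) :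
    degIn G S v ≤ (k + 1) * e ∨ degIn G T v ≤ (k + 1) * e := by
  have hk' : (1 : ℝ) ≤ k := by exact_mod_cast hk
  refine (degIn_lt_or_degIn_le (S := typicalVertices G S T e) hG
    (fun _ => card_nonNeighborsIn_le_of_mem_typicalVertices) v).imp (fun hS => ?_)
    fun hT => hT.trans (by linarith)
  have hsplit : (degIn G S v : ℝ) ≤ degIn G (typicalVertices G S T e) v +
      #(S \ typicalVertices G S T e) := by
    exact_mod_cast degIn_le_degIn_add_card_sdiff G (filter_subset _ _) v
  have hS' : (degIn G (typicalVertices G S T e) v : ℝ) ≤ k := by exact_mod_cast hS.le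
  nlinarith [h.card_left_sdiff_le]

lemma degIn_left_le (h : IsNearlyCompleteBipartite G S T e) (hcut : IsMaxCut G S T)
    (hG : WheelFree (2 * k + 1) G) (hk : 1 ≤ k) (he : 2 * k ≤ e) {v : Fin n} (hv : v ∈ S) :
    degIn G S v ≤ (k + 1) * e :=
  (h.degIn_le_or_degIn_le hG hk he v).elim id (Nat.cast_le.2 (hcut.degIn_le hv)).trans

-- At a vertex `z` with entry `1` the eigenvalue equation gives `lam1 G` up to few terms as the sum
-- over the typical vertices of `T`, and `v` could be joined to all of these.
lemma lam1_sub_le_of_degIn_le (h : IsNearlyCompleteBipartite G S T e) (hcut : IsMaxCut G S T)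
    {t : ℕ} (hG : IsSpexWheel t G) (hx : IsPerronVector G x) (hlam : 0 < lam1 G) (he : 1 ≤ e)
    (hS : t * (e + 1) < #S) {z : Fin n} (hz : x z = 1) {c : ℝ} (hzS : degIn G S z ≤ c) (v : Fin n) :
    lam1 G - c - 2 * e ≤ lam1 G * x v := by
  set T' := typicalVertices G T S e
  have hsub : G.neighborFinset z ⊆ {u ∈ S | G.Adj z u} ∪ (T \ T') ∪ T' := by
    intro u hu
    have huST : u ∈ S ∨ u ∈ T := by simpa only [hcut.1, mem_compl] using em _
    simp only [mem_union, mem_filter, mem_sdiff, (mem_neighborFinset _ _ _).1 hu]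
    tauto
  have hcover : lam1 G ≤ degIn G S z + #(T \ T') + ∑ u ∈ T', x u :=
    calc lam1 G = ∑ u ∈ G.neighborFinset z, x u := by rw [hx.sum_neighborFinset, hz, mul_one]
      _ ≤ ∑ u ∈ {u ∈ S | G.Adj z u} ∪ (T \ T') ∪ T', x u :=
        sum_le_sum_of_subset_of_nonneg hsub fun u _ _ => hx.nonneg u
      _ ≤ ∑ u ∈ {u ∈ S | G.Adj z u} ∪ (T \ T'), x u + ∑ u ∈ T', x u := by
        rw [← sum_union_inter]
        exact le_add_of_nonneg_right (sum_nonneg fun u _ => hx.nonneg u)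
      _ ≤ degIn G S z + #(T \ T') + ∑ u ∈ T', x u := by
        gcongr
        exact (hx.sum_le_card _).trans (by exact_mod_cast card_union_le _ _)
  have herase : ∑ u ∈ T', x u ≤ ∑ u ∈ T'.erase v, x u + 1 := by
    by_cases hv : v ∈ T'
    · linarith [add_sum_erase _ x hv, hx.le_one v]
    · rw [erase_eq_of_notMem hv]
      linarith
  have hle := hG.sum_erase_le (N := T') hlam hx v
    (fun _ => card_nonNeighborsIn_le_of_mem_typicalVertices) (by linarith) hS
  linarith [h.card_right_sdiff_le]

lemma lam1_sub_le (h : IsNearlyCompleteBipartite G S T e) (hcut : IsMaxCut G S T)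
    (hG : IsSpexWheel (2 * k + 1) G) (hx : IsPerronVector G x) (hlam : 0 < lam1 G) (hk : 1 ≤ k)
    (he : 2 * k ≤ e) (hn : (2 * k + 1) * (e + 1) < (n : ℝ) / 2 - e) (v : Fin n) :
    lam1 G - (k + 3) * e ≤ lam1 G * x v := by
  have hk' : (1 : ℝ) ≤ k := by exact_mod_cast hk
  obtain ⟨z, hz⟩ := hx.exists_eq_one
  rcases h.degIn_le_or_degIn_le hG.1 hk he z with hzS | hzT
  · linarith [h.lam1_sub_le_of_degIn_le hcut hG hx hlam (by linarith)
      (by push_cast; linarith [h.le_card_left hcut]) hz hzS v]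
  · linarith [h.swap.lam1_sub_le_of_degIn_le hcut.swap hG hx hlam (by linarith)
      (by push_cast; linarith [h.swap.le_card_left hcut.swap]) hz hzT v]

lemma card_nonNeighborsIn_le (h : IsNearlyCompleteBipartite G S T e) (hcut : IsMaxCut G S T)
    {v : Fin n} {c d : ℝ} (hdeg : (n : ℝ) / 2 - c ≤ degIn G univ v) (hd : degIn G S v ≤ d) :
    #(nonNeighborsIn G T v) ≤ e + c + d := by
  have hsplit : (degIn G univ v : ℝ) = degIn G S v + degIn G T v := by
    exact_mod_cast hcut.degIn_univ v
  have hT : (degIn G T v + #(nonNeighborsIn G T v) : ℝ) = #T := by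
    exact_mod_cast degIn_add_card_nonNeighborsIn G T v
  linarith [h.card_right_le]

end IsNearlyCompleteBipartite

open Filter in
lemma eventually_structure (hk : 2 ≤ k) {κ : ℝ} (hκ : 0 < κ) :
    ∀ᶠ n : ℕ in atTop, ∀ G : SimpleGraph (Fin n), IsSpexWheel (2 * k + 1) G →
      ∀ S T, IsMaxCut G S T → ∀ x, IsPerronVector G x →
        (∀ v, 1 / 2 ≤ x v) ∧ (n : ℝ) / 4 ≤ #S ∧ ∀ v ∈ S, #(nonNeighborsIn G T v) ≤ κ * n := by
  have hk' : (2 : ℝ) ≤ k := by exact_mod_cast hk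
  set δ : ℝ := min (κ / (2 * k + 5)) (1 / (100 * k))
  have hδ : 0 < δ := by positivity
  have hδκ : δ * (2 * k + 5) ≤ κ := (le_div_iff₀ (by positivity)).1 (min_le_left _ _)
  have hδk : δ * (100 * k) ≤ 1 := (le_div_iff₀ (by positivity)).1 (min_le_right _ _)
  filter_upwards [eventually_sum_card_neighbors_le k (pow_pos hδ 2),
    eventually_le_mul_natCast hδ (2 * k), eventually_gt_atTop (4 * k)]
    with n hsum he hn G hG S T hcut x hx
  set e := δ * (n : ℝ)
  have hn' : (0 : ℝ) < n := by exact_mod_cast (by omega : 0 < n)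
  have hen : 100 * (k * e) ≤ n := by nlinarith
  have hke : 2 * e ≤ k * e := by nlinarith
  have hlam := (hG.half_le_lam1_and_le_lam1_mul_sub hk hn).1
  have h : IsNearlyCompleteBipartite G S T e :=
    hcut.isNearlyCompleteBipartite hx (by linarith) hlam fun z => by
      simpa [e, mul_pow] using hsum G hG.1 z
  have hentry := h.lam1_sub_le hcut hG hx (by linarith) (by omega) he (by linarith)
  refine ⟨fun v => ?_, by linarith [h.le_card_left hcut], fun v hv => ?_⟩
  · by_contra! hv
    nlinarith [hentry v]
  · calc (#(nonNeighborsIn G T v) : ℝ) ≤ e + (k + 3) * e + (k + 1) * e :=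
          h.card_nonNeighborsIn_le hcut
            (by linarith [hentry v, hx.lam1_mul_le_degIn_univ v])
            (h.degIn_left_le hcut hG.1 (by omega) he hv)
      _ = δ * (2 * k + 5) * n := by ring
      _ ≤ κ * n := by gcongr

end Stability

section InternalDegrees

open Finset SimpleGraph
open scoped Classical

variable {n k : ℕ} {G : SimpleGraph (Fin n)} {S T : Finset (Fin n)} {x : Fin n → ℝ} {m : ℝ}

/-- The average of the internal degrees of the vertices of `S`, weighted by `x`. It is meaningful
when the weights of `S` have a positive sum. -/
noncomputable def avgInternalDegree (G : SimpleGraph (Fin n)) (x : Fin n → ℝ)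
    (S : Finset (Fin n)) : ℝ :=
  (∑ w ∈ S, degIn G S w * x w) / ∑ w ∈ S, x w

lemma avgInternalDegree_nonneg (hx : ∀ v, 0 ≤ x v) : 0 ≤ avgInternalDegree G x S :=
  div_nonneg (sum_nonneg fun w _ => mul_nonneg (Nat.cast_nonneg _) (hx w))
    (sum_nonneg fun w _ => hx w)

lemma avgInternalDegree_le (hx : ∀ v, 0 ≤ x v) (hS : 0 < ∑ w ∈ S, x w) {a : ℝ}
    (ha : ∀ v ∈ S, degIn G S v ≤ a) : avgInternalDegree G x S ≤ a := by
  rw [avgInternalDegree, div_le_iff₀ hS, mul_sum]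
  exact sum_le_sum fun w hw => mul_le_mul_of_nonneg_right (ha w hw) (hx w)

lemma avgInternalDegree_le_add (hx : IsPerronVector G x) (hS : 0 < ∑ w ∈ S, x w)
    (hd : ∀ v ∈ S, degIn G S v ≤ k) (i : ℕ) :
    avgInternalDegree G x S ≤ i + k * #{w ∈ S | i < degIn G S w} / ∑ w ∈ S, x w := by
  rw [avgInternalDegree, ← sub_le_iff_le_add', div_sub' hS.ne']
  gcongr
  rw [sub_le_iff_le_add', card_filter, Nat.cast_sum, mul_sum, sum_mul, ← sum_add_distrib]
  refine sum_le_sum fun w hw => ?_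
  have := hx.nonneg w
  split_ifs with hi
  · have hwk : (degIn G S w * x w : ℝ) ≤ k * 1 := by
      gcongr
      exacts [hd w hw, hx.le_one w]
    push_cast
    nlinarith [mul_nonneg this i.cast_nonneg]
  · have hwi : (degIn G S w : ℝ) ≤ i := by exact_mod_cast not_lt.1 hi
    push_cast
    nlinarith

lemma IsPerronVector.lam1_mul_sum_le (hx : IsPerronVector G x) (hcut : IsMaxCut G S T) :
    lam1 G * ∑ w ∈ S, x w ≤ ∑ w ∈ S, degIn G S w * x w + #S * ∑ w ∈ T, x w := by
  have hle (u : Fin n) :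
      lam1 G * x u ≤ ∑ w ∈ S, (if G.Adj u w then x w else 0) + ∑ w ∈ T, x w := by
    rw [← hx.sum_neighborFinset, neighborFinset_eq_filter, sum_filter, ← sum_add_sum_compl S,
      ← hcut.1]
    gcongr with w _
    split_ifs
    exacts [le_rfl, hx.nonneg w]
  calc lam1 G * ∑ w ∈ S, x w
      ≤ ∑ u ∈ S, (∑ w ∈ S, (if G.Adj u w then x w else 0) + ∑ w ∈ T, x w) := by
        rw [mul_sum]
        exact sum_le_sum fun u _ => hle u
    _ = ∑ w ∈ S, degIn G S w * x w + #S * ∑ w ∈ T, x w := by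
        rw [sum_add_distrib, sum_comm, sum_const, nsmul_eq_mul]
        congr 1
        refine sum_congr rfl fun w _ => ?_
        rw [← sum_filter, sum_const, nsmul_eq_mul, degIn_eq_card_filter]
        simp only [G.adj_comm w]

-- The quotient matrix of the partition, with weights `x`, has diagonal entries the average internal
-- degrees and off-diagonal entries at most `#S` and `#T`.
lemma IsPerronVector.mul_sub_avgInternalDegree_le (hx : IsPerronVector G x)
    (hcut : IsMaxCut G S T) (hS : 0 < ∑ w ∈ S, x w) (hT : 0 < ∑ w ∈ T, x w)
    (hlam : avgInternalDegree G x T ≤ lam1 G) :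
    (lam1 G - avgInternalDegree G x S) * (lam1 G - avgInternalDegree G x T) ≤ #S * #T := by
  set X := ∑ w ∈ S, x w
  set Y := ∑ w ∈ T, x w
  have hXY : (lam1 G - avgInternalDegree G x S) * X ≤ #S * Y := by
    rw [avgInternalDegree, sub_mul, div_mul_cancel₀ _ hS.ne']
    linarith [hx.lam1_mul_sum_le hcut]
  have hYX : (lam1 G - avgInternalDegree G x T) * Y ≤ #T * X := by
    rw [avgInternalDegree, sub_mul, div_mul_cancel₀ _ hT.ne']
    linarith [hx.lam1_mul_sum_le hcut.swap]
  refine le_of_mul_le_mul_right ?_ (mul_pos hS hT)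
  calc _ = ((lam1 G - avgInternalDegree G x S) * X) * ((lam1 G - avgInternalDegree G x T) * Y) := by
        ring
    _ ≤ (#S * Y) * (#T * X) :=
        mul_le_mul hXY hYX (mul_nonneg (sub_nonneg.2 hlam) hT.le) (by positivity)
    _ = #S * #T * (X * Y) := by ring

lemma degIn_lt_of_card_nonNeighborsIn_le (hG : WheelFree (2 * k + 1) G)
    (hS : ∀ v ∈ S, #(nonNeighborsIn G T v) ≤ m) (hT : (k + 1) * m + 2 * k < #T) :
    ∀ v ∈ S, degIn G S v < k := by
  intro v hv
  refine (degIn_lt_or_degIn_le hG hS v).resolve_right fun h => ?_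
  have hsplit : (degIn G T v + #(nonNeighborsIn G T v) : ℝ) = #T := by
    exact_mod_cast degIn_add_card_nonNeighborsIn G T v
  linarith [hS v hv]

-- Paths on `i + 2` vertices through the many vertices of internal degree greater than `i`, joined
-- up by the neighbours of `v` in `S`, would form the rim of a wheel with hub `v`.
lemma mul_degIn_lt (hG : WheelFree (2 * k + 1) G)
    (hS : ∀ v ∈ S, #(nonNeighborsIn G T v) ≤ m) (hdS : ∀ v ∈ S, degIn G S v < k)
    (hdT : ∀ w ∈ T, degIn G T w ≤ k) {i : ℕ} (hi : i ≤ 1)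
    (hcard : k * (m + 2) * (k + 1) < #{w ∈ T | i < degIn G T w}) :
    ∀ v ∈ S, (i + 3) * degIn G S v < 2 * k := by
  intro v hv
  by_contra! hdeg
  set U := {u ∈ S | G.Adj v u}
  set X := commonNeighborsIn G T (insert v U)
  have hm : 0 ≤ m := (Nat.cast_nonneg _).trans (hS v hv)
  have hUS : ∀ u ∈ insert v U, #(nonNeighborsIn G T u) ≤ m := fun u hu =>
    hS u ((mem_insert.1 hu).elim (· ▸ hv) fun h => (mem_filter.1 h).1)
  have hU : (#(insert v U) : ℝ) ≤ k := by
    exact_mod_cast (card_insert_le _ _).trans (hdS v hv)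
  have hB : (#(T \ X) : ℝ) ≤ k * m := by
    rw [cast_card_sdiff commonNeighborsIn_subset]
    linarith [card_sub_le_card_commonNeighborsIn hUS, mul_le_mul_of_nonneg_right hU hm]
  have hpaths : HasRobustPaths G (T \ (T \ X)) (i + 2) (2 * k) := by
    refine hasRobustPaths_sdiff (by omega) hdT ?_
    simp only [show i + 2 = i + 1 + 1 from rfl, add_le_add_iff_right]
    have : ((#(T \ X) + 2 * k) * (k + 1) : ℝ) ≤ k * (m + 2) * (k + 1) := by
      gcongr
      linarith
    exact_mod_cast this.trans_lt hcard
  rw [Finset.sdiff_sdiff_eq_self commonNeighborsIn_subset] at hpaths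
  exact hG <| containsCopy_wheelGraph_of_hasRobustPaths (hdS v hv).le
    (hdeg.trans_eq (mul_comm _ _)) (fun u hu => (mem_filter.1 hu).2)
    (fun w => adj_of_mem_commonNeighborsIn (mem_insert_self _ _))
    (fun u hu w => adj_of_mem_commonNeighborsIn (mem_insert_of_mem hu)) hpaths

lemma avgInternalDegree_le_or_mul_degIn_lt (hG : WheelFree (2 * k + 1) G)
    (hx : IsPerronVector G x) (hT₀ : 0 < ∑ w ∈ T, x w)
    (hS : ∀ v ∈ S, #(nonNeighborsIn G T v) ≤ m) (hdS : ∀ v ∈ S, degIn G S v < k)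
    (hdT : ∀ w ∈ T, degIn G T w ≤ k)
    (hT : 100 * k * (k * (m + 2) * (k + 1)) ≤ ∑ w ∈ T, x w) {i : ℕ} (hi : i ≤ 1) :
    avgInternalDegree G x T ≤ i + 1 / 100 ∨ ∀ v ∈ S, (i + 3) * degIn G S v < 2 * k := by
  refine (le_or_gt _ _).imp (fun hcard => ?_) (mul_degIn_lt hG hS hdS hdT hi)
  refine (avgInternalDegree_le_add hx hT₀ hdT i).trans (add_le_add_right ?_ _)
  have : (k : ℝ) * #{w ∈ T | i < degIn G T w} ≤ k * (k * (m + 2) * (k + 1)) := by gcongr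
  rw [div_le_iff₀ hT₀]
  linarith

end InternalDegrees

section ExtremalGraphs

open Finset SimpleGraph
open scoped Classical

variable {n k : ℕ} {G : SimpleGraph (Fin n)} {S T : Finset (Fin n)} {x : Fin n → ℝ}

open Filter in
lemma eventually_avgInternalDegree_le_or_mul_degIn_lt (hk : 2 ≤ k) :
    ∀ᶠ n : ℕ in atTop, ∀ G : SimpleGraph (Fin n), IsSpexWheel (2 * k + 1) G →
      ∀ x, IsPerronVector G x → ∀ S T, IsMaxCut G S T →
        k ≤ #S ∧ 0 < ∑ w ∈ S, x w ∧ (∀ v ∈ S, degIn G S v < k) ∧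
        ∀ i : ℕ, i ≤ 1 →
          avgInternalDegree G x T ≤ i + 1 / 100 ∨ ∀ v ∈ S, (i + 3) * degIn G S v < 2 * k := by
  have hk' : (2 : ℝ) ≤ k := by exact_mod_cast hk
  set c : ℝ := 100 * k ^ 2 * (k + 1)
  have hkc : k + 1 ≤ c := le_mul_of_one_le_left (by positivity) (by nlinarith)
  have hc : 0 < c := by positivity
  filter_upwards [eventually_structure hk (κ := 1 / (16 * c)) (by positivity),
    eventually_gt_atTop 0, eventually_le_mul_natCast (ε := 1 / 16) (by norm_num) (2 * c)]
    with n hstruct hn hcn G hG x hx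
  have hm : c * (1 / (16 * c) * n) = 1 / 16 * n := by field_simp
  set m := 1 / (16 * c) * (n : ℝ)
  have hm₀ : 0 ≤ m := by positivity
  have hn' : (0 : ℝ) < n / 8 := by positivity
  have hsum {S T : Finset (Fin n)} (hcut : IsMaxCut G S T) : (n : ℝ) / 8 ≤ ∑ w ∈ S, x w := by
    obtain ⟨hhalf, hS, -⟩ := hstruct G hG S T hcut x hx
    have := card_nsmul_le_sum S x (1 / 2) fun v _ => hhalf v
    rw [nsmul_eq_mul] at this
    linarith
  have hdeg {S T : Finset (Fin n)} (hcut : IsMaxCut G S T) : ∀ v ∈ S, degIn G S v < k :=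
    degIn_lt_of_card_nonNeighborsIn_le hG.1 (hstruct G hG S T hcut x hx).2.2 <| by
      linarith [(hstruct G hG T S hcut.swap x hx).2.1, mul_le_mul_of_nonneg_right hkc hm₀]
  intro S T hcut
  refine ⟨?_, hn'.trans_le (hsum hcut), hdeg hcut, fun i hi => ?_⟩
  · exact_mod_cast (by linarith [(hstruct G hG S T hcut x hx).2.1] : (k : ℝ) ≤ #S)
  · refine avgInternalDegree_le_or_mul_degIn_lt hG.1 hx (hn'.trans_le (hsum hcut.swap))
      (hstruct G hG S T hcut x hx).2.2 (hdeg hcut) (fun w hw => (hdeg hcut.swap w hw).le) ?_ hi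
    calc 100 * k * (k * (m + 2) * (k + 1)) = c * m + 2 * c := by ring
      _ ≤ ∑ w ∈ T, x w := by linarith [hsum hcut.swap]

lemma IsSpexWheel.sub_lt_avgInternalDegree_add (hG : IsSpexWheel (2 * k + 1) G) (hk : 2 ≤ k)
    (hn : 8 * k ^ 2 < n) (hcut : IsMaxCut G S T) (hx : IsPerronVector G x)
    (hS : 0 < ∑ w ∈ S, x w) (hT : 0 < ∑ w ∈ T, x w) (hdT : ∀ w ∈ T, degIn G T w ≤ k) :
    k - 5 / 4 < avgInternalDegree G x S + avgInternalDegree G x T := by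
  have hn' : (8 * k ^ 2 : ℝ) < n := by exact_mod_cast hn
  have hk' : (2 : ℝ) ≤ k := by exact_mod_cast hk
  obtain ⟨hlam, hprod⟩ := hG.half_le_lam1_and_le_lam1_mul_sub hk (by nlinarith)
  have hTk : avgInternalDegree G x T ≤ k :=
    avgInternalDegree_le hx.nonneg hT fun w hw => by exact_mod_cast hdT w hw
  have hquot := hx.mul_sub_avgInternalDegree_le hcut hS hT (by nlinarith)
  have hST : (#S + #T : ℝ) = n := by exact_mod_cast hcut.card_add_card
  have hcard : (#S * #T : ℝ) ≤ n ^ 2 / 4 := by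
    rw [← hST]
    linarith [sq_nonneg (#S - #T : ℝ)]
  have hST₀ : 0 ≤ avgInternalDegree G x S * avgInternalDegree G x T :=
    mul_nonneg (avgInternalDegree_nonneg hx.nonneg) (avgInternalDegree_nonneg hx.nonneg)
  by_contra! hgap
  nlinarith

-- The case `i = 0` improves the bound on the internal degrees of `S` to `3 d < 2 k`; only for
-- `k ≥ 6` is this enough for the case `i = 1` to improve it further.
lemma two_mul_degIn_lt (hk4 : k ≠ 4) (hk5 : k ≠ 5) (hx : IsPerronVector G x)
    (hS : 0 < ∑ w ∈ S, x w) (hdS : ∀ v ∈ S, degIn G S v + 2 ≤ k)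
    (hgap : k - 5 / 4 < avgInternalDegree G x S + avgInternalDegree G x T)
    (hor : ∀ i : ℕ, i ≤ 1 →
      avgInternalDegree G x T ≤ i + 1 / 100 ∨ ∀ v ∈ S, (i + 3) * degIn G S v < 2 * k) :
    ∀ v ∈ S, 2 * degIn G S v < k := by
  have hS₂ : avgInternalDegree G x S ≤ k - 2 :=
    avgInternalDegree_le hx.nonneg hS fun v hv => by
      rw [le_sub_iff_add_le]
      exact_mod_cast hdS v hv
  have hd₃ : ∀ v ∈ S, 3 * degIn G S v < 2 * k := by
    simpa using (hor 0 zero_le_one).resolve_left fun h => by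
      push_cast at h
      linarith
  intro v hv
  rcases le_or_gt k 5 with hk | hk
  · have := hdS v hv
    omega
  have hS₃ : avgInternalDegree G x S ≤ (2 * k - 1) / 3 :=
    avgInternalDegree_le hx.nonneg hS fun v hv => by
      rw [le_div_iff₀' (by norm_num), le_sub_iff_add_le]
      exact_mod_cast hd₃ v hv
  have hd₄ := (hor 1 le_rfl).resolve_left fun h => by
    have : (6 : ℝ) ≤ k := by exact_mod_cast hk
    push_cast at h
    linarith
  linarith [hd₄ v hv]

lemma IsSpexWheel.not_two_mul_degIn_lt (hG : IsSpexWheel (2 * k + 1) G) (hk : 2 ≤ k)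
    (hkS : k ≤ #S) (hcut : IsMaxCut G S T) (hx : IsPerronVector G x)
    (hS : 0 < ∑ w ∈ S, x w) (hT : 0 < ∑ w ∈ T, x w)
    (hgap : k - 5 / 4 < avgInternalDegree G x S + avgInternalDegree G x T)
    (hdS : ∀ v ∈ S, 2 * degIn G S v < k) : ¬∀ w ∈ T, 2 * degIn G T w < k := by
  intro hdT
  have hle {A : Finset (Fin n)} (hA : 0 < ∑ w ∈ A, x w) {d : ℕ}
      (hd : ∀ w ∈ A, 2 * degIn G A w ≤ d) : avgInternalDegree G x A ≤ d / 2 :=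
    avgInternalDegree_le hx.nonneg hA fun w hw => by
      rw [le_div_iff₀' two_pos]
      exact_mod_cast hd w hw
  rcases k.even_or_odd with heven | hodd
  · have hd {a : ℕ} (ha : 2 * a < k) : 2 * a ≤ k - 2 := by
      obtain ⟨j, rfl⟩ := heven
      omega
    have hS' := hle hS fun v hv => hd (hdS v hv)
    have hT' := hle hT fun w hw => hd (hdT w hw)
    rw [Nat.cast_sub hk] at hS' hT'
    push_cast at hS' hT'
    linarith
  · have hS' := hle hS fun v hv => Nat.le_sub_one_of_lt (hdS v hv)
    have hT' := hle hT fun w hw => Nat.le_sub_one_of_lt (hdT w hw)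
    rw [Nat.cast_pred (by omega)] at hS' hT'
    obtain ⟨hlam, hprod⟩ := hG.mul_le_lam1_mul_sub hk hcut.card_add_card hkS (.inl hodd)
    have hk' : (2 : ℝ) ≤ k := by exact_mod_cast hk
    have hquot := hx.mul_sub_avgInternalDegree_le hcut hS hT (by linarith)
    have hmul : (lam1 G - (k - 1) / 2) * (lam1 G - (k - 1) / 2) ≤
        (lam1 G - avgInternalDegree G x S) * (lam1 G - avgInternalDegree G x T) :=
      mul_le_mul (by linarith) (by linarith) (by linarith) (by linarith)
    nlinarith

end ExtremalGraphs

open Filter in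
theorem exists_internal_degree_k_sub_one_general (k : ℕ) (hk : 2 ≤ k) (hk4 : k ≠ 4)
    (hk5 : k ≠ 5) :
    ∃ N : ℕ, ∀ n : ℕ, N ≤ n → ∀ G : SimpleGraph (Fin n), IsSpexWheel (2 * k + 1) G →
      ∀ S T : Finset (Fin n), IsMaxCut G S T →
        ∃ v : Fin n, (v ∈ S ∧ degIn G S v = k - 1) ∨ (v ∈ T ∧ degIn G T v = k - 1) := by
  refine eventually_atTop.1 ?_
  filter_upwards [eventually_avgInternalDegree_le_or_mul_degIn_lt hk,
    eventually_gt_atTop (8 * k ^ 2)] with n h hn G hG S T hcut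
  have : NeZero n := ⟨by omega⟩
  obtain ⟨x, hx⟩ := exists_isPerronVector G
  obtain ⟨hkS, hS, hdS, hSor⟩ := h G hG x hx S T hcut
  obtain ⟨-, hT, hdT, hTor⟩ := h G hG x hx T S hcut.swap
  have hgap := hG.sub_lt_avgInternalDegree_add hk hn hcut hx hS hT fun w hw => (hdT w hw).le
  by_contra! hne
  have hdS₂ (v) (hv : v ∈ S) : degIn G S v + 2 ≤ k := by have := hdS v hv; grind
  have hdT₂ (w) (hw : w ∈ T) : degIn G T w + 2 ≤ k := by have := hdT w hw; grind
  exact hG.not_two_mul_degIn_lt hk hkS hcut hx hS hT hgap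
    (two_mul_degIn_lt hk4 hk5 hx hS hdS₂ hgap hSor)
    (two_mul_degIn_lt hk4 hk5 hx hT hdT₂ (by rwa [add_comm] at hgap) hTor)

/-- For `k ≥ 3`, `k ∉ {4,5}`, there is a vertex of internal degree
exactly `k - 1`. -/
theorem exists_internal_degree_k_sub_one (k : ℕ) (hk : 3 ≤ k) (hk4 : k ≠ 4)
    (hk5 : k ≠ 5) :
    ∃ N : ℕ, ∀ n : ℕ, N ≤ n → ∀ G : SimpleGraph (Fin n), IsSpexWheel (2 * k + 1) G →
      ∀ S T : Finset (Fin n), IsMaxCut G S T →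
        ∃ v : Fin n, (v ∈ S ∧ degIn G S v = k - 1) ∨ (v ∈ T ∧ degIn G T v = k - 1) :=
  exists_internal_degree_k_sub_one_general k (by omega) hk4 hk5
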